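/- arXiv:1503.01299 — 3 statements merged into one kernel-verified Lean document; each statement's English description precedes it below -/
import Mathlib

section
/- Let f be a measurable real-valued function on I that is positive almost everywhere, integrable with ∫_I f(x) dx = 1, such that 1/f is integrable on I, and suppose there exists α > 0 with f(x) ≤ 2 − α for almost every x ∈ I. Then (∫_I f(x) dx) · (∫_I 1/f(x) dx) ≥ 1 + α · ∫_I (f(x) − 1)² dx. -/
open MeasureTheory

theorem two_sub_le_one_div {K : Type*} [Field K] [LinearOrder K] [IsStrictOrderedRing K]
    {t : K} (ht : 0 < t) : 2 - t ≤ 1 / t := by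
  rw [le_div_iff₀ ht]
  linarith [sq_nonneg (t - 1)]

/-- The tangent line of `1 / t` at `1` is `2 - t`, with exact remainder `(1 / t) * (t - 1) ^ 2`. -/
theorem two_sub_add_mul_sq_le_one_div {K : Type*} [Field K] [LinearOrder K]
    [IsStrictOrderedRing K] {t α : K} (ht : 0 < t) (hb : t ≤ 2 - α) :
    2 - t + α * (t - 1) ^ 2 ≤ 1 / t := by
  have hα : α ≤ 1 / t := (le_sub_comm.mp hb).trans (two_sub_le_one_div ht)
  calc
    2 - t + α * (t - 1) ^ 2 ≤ 2 - t + 1 / t * (t - 1) ^ 2 := by gcongr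
    _ = 1 / t := by field_simp; ring

section

variable {Ω : Type*} [MeasurableSpace Ω] {μ : Measure Ω} {f : Ω → ℝ} {α : ℝ}

theorem two_mul_measureReal_univ_sub_integral_add_mul_integral_sq_le [IsFiniteMeasure μ]
    (hpos : ∀ᵐ x ∂μ, 0 < f x) (hf : Integrable f μ) (hinv : Integrable (fun x => 1 / f x) μ)
    (hbound : ∀ᵐ x ∂μ, f x ≤ 2 - α) :
    2 * μ.real Set.univ - ∫ x, f x ∂μ + α * ∫ x, (f x - 1) ^ 2 ∂μ ≤ ∫ x, 1 / f x ∂μ := by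
  have hlin : Integrable (fun x => 2 - f x) μ := (integrable_const 2).sub hf
  have hmem : MemLp f 2 μ := by
    refine memLp_of_bounded (a := 0) (b := 2 - α) ?_ hf.aestronglyMeasurable 2
    filter_upwards [hpos, hbound] with x hx hb using ⟨hx.le, hb⟩
  have hsq : Integrable (fun x => α * (f x - 1) ^ 2) μ :=
    (hmem.sub (memLp_const 1)).integrable_sq.const_mul α
  calc
    2 * μ.real Set.univ - ∫ x, f x ∂μ + α * ∫ x, (f x - 1) ^ 2 ∂μ
      = ∫ x, (2 - f x + α * (f x - 1) ^ 2) ∂μ := by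
        rw [integral_add hlin hsq, integral_sub (integrable_const 2) hf, integral_const,
          integral_const_mul, smul_eq_mul, mul_comm 2]
    _ ≤ ∫ x, 1 / f x ∂μ := by
        refine integral_mono_ae (hlin.add hsq) hinv ?_
        filter_upwards [hpos, hbound] with x hx hb using two_sub_add_mul_sq_le_one_div hx hb

theorem integral_pos_of_ae_pos [NeZero μ] (hpos : ∀ᵐ x ∂μ, 0 < f x) (hf : Integrable f μ) :
    0 < ∫ x, f x ∂μ := by
  have hnonneg : 0 ≤ᵐ[μ] f := hpos.mono fun _ hx => hx.le
  refine (integral_nonneg_of_ae hnonneg).lt_of_ne' fun hzero => ?_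
  obtain ⟨x, hx, hx0⟩ := (hpos.and ((integral_eq_zero_iff_of_nonneg_ae hnonneg hf).mp hzero)).exists
  exact hx.ne' hx0

theorem integral_mul_integral_inv_ge_general [IsProbabilityMeasure μ]
    (hpos : ∀ᵐ x ∂μ, 0 < f x) (hf : Integrable f μ) (hinv : Integrable (fun x => 1 / f x) μ)
    (hbound : ∀ᵐ x ∂μ, f x ≤ (2 - α) * ∫ y, f y ∂μ) :
    (∫ x, f x ∂μ) * ∫ x, 1 / f x ∂μ ≥ 1 + α * ∫ x, (f x / (∫ y, f y ∂μ) - 1) ^ 2 ∂μ := by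
  have hmean : 0 < ∫ x, f x ∂μ := integral_pos_of_ae_pos hpos hf
  set m := ∫ x, f x ∂μ with hm
  have hinv_div : (fun x => 1 / (f x / m)) = fun x => m * (1 / f x) := by
    funext x
    rw [one_div_div, mul_one_div]
  have hmean_div : ∫ x, f x / m ∂μ = 1 := by
    rw [integral_div, ← hm, div_self hmean.ne']
  have hnormalized := two_mul_measureReal_univ_sub_integral_add_mul_integral_sq_le (α := α)
    (hpos.mono fun _ hx => div_pos hx hmean) (hf.div_const m)
    (hinv_div ▸ hinv.const_mul m) (hbound.mono fun _ hx => (div_le_iff₀ hmean).mpr hx)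
  rw [hmean_div, hinv_div, integral_const_mul, probReal_univ] at hnormalized
  linarith

end

/-- Lemma 2 of the supplementary material: if `f` is measurable, a.e. positive on
`I = [-1/2, 1/2]`, integrable with `∫_I f = 1`, `1/f` integrable, and
`f ≤ 2 - α` a.e. for some `α > 0`, then
`(∫_I f) · (∫_I 1/f) ≥ 1 + α ∫_I (f - 1)²`. -/
theorem integral_mul_integral_inv_ge
    (f : ℝ → ℝ) (hmeas : Measurable f)
    (μ : Measure ℝ) (hμ : μ = volume.restrict (Set.Icc (-(1 : ℝ) / 2) (1 / 2)))
    (hpos : ∀ᵐ x ∂μ, 0 < f x)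
    (hf : Integrable f μ) (hone : ∫ x, f x ∂μ = 1)
    (hinv : Integrable (fun x => 1 / f x) μ)
    (α : ℝ) (hα : 0 < α) (hbound : ∀ᵐ x ∂μ, f x ≤ 2 - α) :
    (∫ x, f x ∂μ) * ∫ x, 1 / f x ∂μ ≥ 1 + α * ∫ x, (f x - 1) ^ 2 ∂μ := by
  have : IsProbabilityMeasure μ := ⟨by rw [hμ]; norm_num⟩
  simpa only [hone, div_one] using
    integral_mul_integral_inv_ge_general hpos hf hinv (by simpa only [hone, mul_one] using hbound)
end

section
/- There exists a constant κ > 0, independent of all other data, such that the following holds: for every m ≥ 2, every real m × m symmetric positive semidefinite matrix Σ, every real n × m matrix A, and every ε > 0, if U is drawn from the Haar probability measure on the orthogonal group O(m), then with probability at least 1 − exp(−κ·(m−1)·ε²) one has |τ_n(A·U·Σ·Uᵀ·Aᵀ) − τ_m(Σ)·τ_n(A·Aᵀ)| ≤ 2ε·‖Σ‖·‖A·Aᵀ‖, where τ_k(B) := trace(B)/k denotes the normalized trace of a k × k matrix and ‖·‖ denotes the operator (spectral) norm. -/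
open MeasureTheory Matrix

/-- The `L²` operator (spectral) norm of a real matrix. -/
noncomputable def matrixOpNorm {n m : ℕ} (A : Matrix (Fin n) (Fin m) ℝ) : ℝ :=
  ‖LinearMap.toContinuousLinearMap (Matrix.toEuclideanLin A)‖

/-!
Write `Y = tr (M U S Uᵀ) - tr M tr S / m` with `M = Aᵀ A`. Haar measure is invariant under left
multiplication by the rotations `exp (t E)` in the coordinate planes, so functions on the group
can be integrated by parts along each generator `E`. Since `∑ [[M, E], E] = 4 tr M - 4 m M` for
symmetric `M`, the traceless part of `M` is an eigenvector of the sum of the second derivatives,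
and integration by parts becomes `E[Y g(Y)] = E[τ g'(Y)]`, where `τ` is a multiple of the squared
gradient of `Y` and is at most `v = 4 ‖S‖² ‖M‖_F² / m`.

Herbst's argument would turn this identity into a Gaussian tail with a constant prefactor, which
says nothing for small `ε`, where the claimed failure probability is close to `1`. Testing the
identity on `g y = y exp (y² / 4v) / (y² + r v)` instead gives `P(Y² > r v) ≤ exp (-r / 4)` at
every scale.
-/

section SteinKernel

variable {Ω : Type*} [MeasurableSpace Ω] {μ : Measure Ω} {Y τ : Ω → ℝ} {v T B : ℝ}

/-- `τ` is a Stein kernel of the random variable `Y`: `E[Y g(Y)] = E[τ g'(Y)]` for all `C¹` test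
functions `g`. Kernels are taken on the sample space rather than as functions of `Y`, and `g` may
be unbounded, since the definition is only applied to bounded `Y`. -/
def IsSteinKernel (Y τ : Ω → ℝ) (μ : Measure Ω) : Prop :=
  ∀ g : ℝ → ℝ, ContDiff ℝ 1 g → ∫ ω, Y ω * g (Y ω) ∂μ = ∫ ω, τ ω * deriv g (Y ω) ∂μ

/-- The test function from which the tail bound at level `Y² > T` is read off, for kernels bounded
by `v`. Its derivative is positive on `y² ≤ T`, while for `y² > T` the term `y g(y)` outweighs
`v g'(y)` by an amount exponential in `T / v`. -/
noncomputable def steinTest (v T y : ℝ) : ℝ :=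
  y * (Real.exp (y ^ 2 / (4 * v)) / (y ^ 2 + T))

lemma contDiff_steinTest (hT : 0 < T) : ContDiff ℝ 1 (steinTest v T) := by
  unfold steinTest
  have hpos (y : ℝ) : y ^ 2 + T ≠ 0 := by positivity
  fun_prop (disch := exact hpos)

lemma deriv_steinTest (hT : 0 < T) (y : ℝ) :
    deriv (steinTest v T) y = Real.exp (y ^ 2 / (4 * v)) / (y ^ 2 + T) *
      ((T - y ^ 2) / (y ^ 2 + T) + y ^ 2 / (2 * v)) := by
  have hpos : y ^ 2 + T ≠ 0 := by positivity
  have hsq : HasDerivAt (fun y : ℝ => y ^ 2) (2 * y) y := by simpa using hasDerivAt_pow 2 y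
  refine ((hasDerivAt_id' y).fun_mul
    ((hsq.div_const (4 * v)).exp.fun_div (hsq.add_const T) hpos)).deriv.trans ?_
  field_simp
  ring

lemma mul_deriv_steinTest_sub_le {k y : ℝ} (hv : 0 < v) (hk : k ∈ Set.Icc 0 v) (hT : 0 < T)
    (hy : y ^ 2 ≤ T) :
    k * deriv (steinTest v T) y - y * steinTest v T y ≤ v / T := by
  have hexp : (1 - y ^ 2 / (2 * v)) * Real.exp (y ^ 2 / (4 * v)) ≤ 1 := by
    have h := Real.add_one_le_exp (-(y ^ 2 / (2 * v)))
    calc (1 - y ^ 2 / (2 * v)) * Real.exp (y ^ 2 / (4 * v))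
        ≤ Real.exp (-(y ^ 2 / (2 * v))) * Real.exp (y ^ 2 / (4 * v)) := by gcongr; linarith
      _ = Real.exp (-(y ^ 2 / (4 * v))) := by rw [← Real.exp_add]; congr 1; field_simp; ring
      _ ≤ 1 := Real.exp_le_one_iff.mpr (by simp only [Left.neg_nonpos_iff]; positivity)
  have hderiv : k * deriv (steinTest v T) y ≤
      v * (Real.exp (y ^ 2 / (4 * v)) / (y ^ 2 + T) * (1 + y ^ 2 / (2 * v))) := by
    have hslope0 : 0 ≤ (T - y ^ 2) / (y ^ 2 + T) := div_nonneg (by linarith) (by positivity)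
    have hslope1 : (T - y ^ 2) / (y ^ 2 + T) ≤ 1 :=
      div_le_one_of_le₀ (by linarith [sq_nonneg y]) (by positivity)
    rw [deriv_steinTest hT]
    exact mul_le_mul hk.2 (by gcongr) (mul_nonneg (by positivity)
      (add_nonneg hslope0 (by positivity))) hv.le
  calc k * deriv (steinTest v T) y - y * steinTest v T y
      ≤ v * (Real.exp (y ^ 2 / (4 * v)) / (y ^ 2 + T) * (1 + y ^ 2 / (2 * v))) -
        y * steinTest v T y := by gcongr
    _ = v / (y ^ 2 + T) * ((1 - y ^ 2 / (2 * v)) * Real.exp (y ^ 2 / (4 * v))) := by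
        unfold steinTest
        field_simp
        ring
    _ ≤ v / (y ^ 2 + T) * 1 := by gcongr
    _ ≤ v / T := by
        rw [mul_one]
        gcongr
        linarith [sq_nonneg y]

lemma mul_deriv_steinTest_sub_le_neg {k y : ℝ} (hv : 0 < v) (hk : k ∈ Set.Icc 0 v) (hT : 0 < T)
    (hy : T < y ^ 2) :
    k * deriv (steinTest v T) y - y * steinTest v T y ≤ -(Real.exp (T / (4 * v)) / 4) := by
  have hderiv : k * deriv (steinTest v T) y ≤
      v * (Real.exp (y ^ 2 / (4 * v)) / (y ^ 2 + T) * (y ^ 2 / (2 * v))) := by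
    have hslope : (T - y ^ 2) / (y ^ 2 + T) ≤ 0 :=
      div_nonpos_of_nonpos_of_nonneg (by linarith) (by positivity)
    rw [deriv_steinTest hT]
    refine (mul_le_mul_of_nonneg_left ?_ hk.1).trans (mul_le_mul_of_nonneg_right hk.2 ?_)
    · gcongr
      linarith
    · positivity
  have hfrac : 1 / 4 ≤ y ^ 2 / (2 * (y ^ 2 + T)) := by
    rw [div_le_div_iff₀ (by norm_num) (by positivity)]
    linarith
  calc k * deriv (steinTest v T) y - y * steinTest v T y
      ≤ v * (Real.exp (y ^ 2 / (4 * v)) / (y ^ 2 + T) * (y ^ 2 / (2 * v))) -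
        y * steinTest v T y := by gcongr
    _ = -(Real.exp (y ^ 2 / (4 * v)) * (y ^ 2 / (2 * (y ^ 2 + T)))) := by
        unfold steinTest
        field_simp
        ring
    _ ≤ -(Real.exp (T / (4 * v)) * (1 / 4)) := by gcongr
    _ = -(Real.exp (T / (4 * v)) / 4) := by ring

lemma integrable_comp_of_abs_le [IsFiniteMeasure μ] {f : ℝ → ℝ} (hf : Continuous f)
    (hY : AEMeasurable Y μ) (hB : ∀ᵐ ω ∂μ, |Y ω| ≤ B) : Integrable (fun ω => f (Y ω)) μ := by
  obtain ⟨C, hC⟩ := (isCompact_Icc (a := -B) (b := B)).exists_bound_of_continuousOn hf.continuousOn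
  refine .of_bound (hf.measurable.comp_aemeasurable hY).aestronglyMeasurable C ?_
  filter_upwards [hB] with ω hω using hC _ (abs_le.mp hω)

lemma le_exp_neg_of_mul_one_add_mul_exp_le_one {p c : ℝ} (hp : 0 ≤ p)
    (h : p * (1 + c * Real.exp c) ≤ 1) : p ≤ Real.exp (-c) := by
  have hc : Real.exp c ≤ 1 + c * Real.exp c := by
    have := mul_le_mul_of_nonneg_right (Real.add_one_le_exp (-c)) (Real.exp_pos c).le
    rw [← Real.exp_add, neg_add_cancel, Real.exp_zero] at this
    linarith
  rw [Real.exp_neg, ← one_div, le_div_iff₀ (Real.exp_pos c)]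
  exact (mul_le_mul_of_nonneg_left hc hp).trans h

namespace IsSteinKernel

lemma measureReal_lt_sq_mul_le [IsProbabilityMeasure μ] (h : IsSteinKernel Y τ μ)
    (hY : AEMeasurable Y μ) (hB : ∀ᵐ ω ∂μ, |Y ω| ≤ B) (hτ : AEMeasurable τ μ)
    (hτv : ∀ᵐ ω ∂μ, τ ω ∈ Set.Icc 0 v) (hv : 0 < v) (hT : 0 < T) :
    μ.real {ω | T < Y ω ^ 2} * (v / T + Real.exp (T / (4 * v)) / 4) ≤ v / T := by
  have hg : ContDiff ℝ 1 (steinTest v T) := contDiff_steinTest hT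
  have hYg : Integrable (fun ω => Y ω * steinTest v T (Y ω)) μ :=
    integrable_comp_of_abs_le (continuous_id.mul hg.continuous) hY hB
  have hτg : Integrable (fun ω => τ ω * deriv (steinTest v T) (Y ω)) μ := by
    refine (integrable_comp_of_abs_le (hg.continuous_deriv le_rfl) hY hB).bdd_mul
      hτ.aestronglyMeasurable (c := v) ?_
    filter_upwards [hτv] with ω hω using by simpa [abs_of_nonneg hω.1] using hω.2
  have hs : NullMeasurableSet {ω | T < Y ω ^ 2} μ :=
    nullMeasurableSet_lt aemeasurable_const (hY.pow_const 2)
  have hind : Integrable ({ω | T < Y ω ^ 2}.indicator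
      fun _ => v / T + Real.exp (T / (4 * v)) / 4) μ := (integrable_const _).indicator₀ hs
  have hle : ∫ ω, (τ ω * deriv (steinTest v T) (Y ω) - Y ω * steinTest v T (Y ω)) ∂μ ≤
      ∫ ω, (v / T - {ω | T < Y ω ^ 2}.indicator
        (fun _ => v / T + Real.exp (T / (4 * v)) / 4) ω) ∂μ := by
    refine integral_mono_ae (hτg.sub hYg) ((integrable_const _).sub hind) ?_
    filter_upwards [hτv] with ω hω
    by_cases hωT : T < Y ω ^ 2
    · simpa [hωT] using mul_deriv_steinTest_sub_le_neg hv hω hT hωT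
    · simpa [hωT] using mul_deriv_steinTest_sub_le hv hω hT (not_lt.mp hωT)
  rw [integral_sub hτg hYg, ← h _ hg, sub_self, integral_sub (integrable_const _) hind,
    integral_indicator₀ hs] at hle
  simpa using hle

lemma ae_eq_zero [IsFiniteMeasure μ] (h : IsSteinKernel Y τ μ) (hY : AEMeasurable Y μ)
    (hB : ∀ᵐ ω ∂μ, |Y ω| ≤ B) (hτ : τ =ᵐ[μ] 0) : Y =ᵐ[μ] 0 := by
  have hsq : ∫ ω, Y ω * Y ω ∂μ = 0 := by
    rw [h (fun y => y) contDiff_fun_id, integral_eq_zero_of_ae]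
    filter_upwards [hτ] with ω hω using by simp [hω]
  rw [integral_eq_zero_iff_of_nonneg (fun ω => mul_self_nonneg (Y ω))
    (integrable_comp_of_abs_le (continuous_id.mul continuous_id) hY hB)] at hsq
  filter_upwards [hsq] with ω hω using mul_self_eq_zero.mp hω

theorem measureReal_lt_sq_le [IsProbabilityMeasure μ] (h : IsSteinKernel Y τ μ)
    (hY : AEMeasurable Y μ) (hB : ∀ᵐ ω ∂μ, |Y ω| ≤ B) (hτ : AEMeasurable τ μ)
    (hτv : ∀ᵐ ω ∂μ, τ ω ∈ Set.Icc 0 v) {r : ℝ} (hr : 0 < r) :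
    μ.real {ω | r * v < Y ω ^ 2} ≤ Real.exp (-(r / 4)) := by
  obtain ⟨ω, hω⟩ := hτv.exists
  rcases (hω.1.trans hω.2).eq_or_lt with rfl | hv
  · have hY0 : Y =ᵐ[μ] 0 := h.ae_eq_zero hY hB (hτv.mono fun ω hω => le_antisymm hω.2 hω.1)
    have hnull : μ.real {ω | r * 0 < Y ω ^ 2} = 0 := by
      rw [measureReal_eq_zero_iff, measure_eq_zero_iff_ae_notMem]
      filter_upwards [hY0] with ω hω using by simp [hω]
    exact hnull.trans_le (Real.exp_nonneg _)
  · have key := h.measureReal_lt_sq_mul_le hY hB hτ hτv hv (mul_pos hr hv)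
    refine le_exp_neg_of_mul_one_add_mul_exp_le_one measureReal_nonneg ?_
    have hexp : r * v / (4 * v) = r / 4 := by field_simp
    rw [hexp, div_mul_cancel_right₀ hv.ne'] at key
    have := mul_le_mul_of_nonneg_left key hr.le
    rw [mul_inv_cancel₀ hr.ne'] at this
    refine le_of_eq_of_le ?_ this
    field_simp

end IsSteinKernel

end SteinKernel

section LieDerivative

lemma integrable_of_continuous {G : Type*} [TopologicalSpace G] [CompactSpace G]
    [MeasurableSpace G] [OpensMeasurableSpace G] {μ : Measure G} [IsFiniteMeasure μ] {F : G → ℝ}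
    (hF : Continuous F) : Integrable F μ :=
  hF.integrable_of_hasCompactSupport (.of_compactSpace F)

variable {G : Type*} [Group G] [TopologicalSpace G] [CompactSpace G] [ContinuousMul G]
  [MeasurableSpace G] [BorelSpace G] {μ : Measure G} [IsFiniteMeasure μ] [μ.IsMulLeftInvariant]
  {γ : ℝ → G} {F F' H H' : G → ℝ}

lemma integral_deriv_oneParameter_eq_zero (hγ : ∀ s t, γ (s + t) = γ s * γ t) (hF : Continuous F)
    (hF' : Continuous F') (hd : ∀ U, HasDerivAt (fun t => F (γ t * U)) (F' U) 0) :
    ∫ U, F' U ∂μ = 0 := by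
  have hγ0 : γ 0 = 1 := by simpa using hγ 0 0
  have hdt (U : G) (t : ℝ) : HasDerivAt (fun t => F (γ t * U)) (F' (γ t * U)) t := by
    have h : HasDerivAt (fun s => F (γ s * (γ t * U))) (F' (γ t * U)) (t - t) := by
      simpa using hd (γ t * U)
    simpa [← mul_assoc, ← hγ] using h.comp_sub_const t t
  obtain ⟨C, hC⟩ := isCompact_univ.exists_bound_of_continuousOn hF'.continuousOn
  have hderiv := (hasDerivAt_integral_of_dominated_loc_of_deriv_le (μ := μ) (x₀ := (0 : ℝ))
    (F := fun t U => F (γ t * U)) (F' := fun t U => F' (γ t * U)) (bound := fun _ => C)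
    Filter.univ_mem
    (.of_forall fun t => (integrable_of_continuous (by fun_prop)).aestronglyMeasurable)
    (integrable_of_continuous (by fun_prop))
    (integrable_of_continuous (by fun_prop)).aestronglyMeasurable
    (.of_forall fun U t _ => hC _ (Set.mem_univ _)) (integrable_const C)
    (.of_forall fun U t _ => hdt U t)).2
  simp only [integral_mul_left_eq_self (μ := μ) F, hγ0, one_mul] at hderiv
  exact hderiv.unique (hasDerivAt_const _ _)

lemma integral_deriv_oneParameter_mul (hγ : ∀ s t, γ (s + t) = γ s * γ t)
    (hF : Continuous F) (hF' : Continuous F') (hH : Continuous H) (hH' : Continuous H')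
    (hdF : ∀ U, HasDerivAt (fun t => F (γ t * U)) (F' U) 0)
    (hdH : ∀ U, HasDerivAt (fun t => H (γ t * U)) (H' U) 0) :
    ∫ U, F' U * H U ∂μ = -∫ U, F U * H' U ∂μ := by
  have hγ0 : γ 0 = 1 := by simpa using hγ 0 0
  have hsum : ∫ U, (F' U * H U + F U * H' U) ∂μ = 0 :=
    integral_deriv_oneParameter_eq_zero hγ (hF.mul hH) ((hF'.mul hH).add (hF.mul hH'))
      fun U => by simpa [hγ0] using (hdF U).fun_mul (hdH U)
  rw [integral_add (integrable_of_continuous (by fun_prop))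
    (integrable_of_continuous (by fun_prop))] at hsum
  exact eq_neg_of_add_eq_zero_left hsum

end LieDerivative

section OrthogonalGroup

variable {m : Type*} [Fintype m] [DecidableEq m]

instance compactSpace_unitaryGroup {𝕜 : Type*} [RCLike 𝕜] : CompactSpace (unitaryGroup m 𝕜) := by
  have hclosed : IsClosed (unitaryGroup m 𝕜 : Set (Matrix m m 𝕜)) := isClosed_unitary
  refine isCompact_iff_compactSpace.mp <| .of_isClosed_subset
    (isCompact_univ_pi fun _ => isCompact_univ_pi fun _ => isCompact_closedBall (0 : 𝕜) 1)
    hclosed fun U hU i _ j _ => ?_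
  simpa using entry_norm_bound_of_unitary hU i j

/-- The one-parameter group of rotations `t ↦ exp (t X)` generated by a skew-symmetric matrix. -/
noncomputable def skewRotation (X : Matrix m m ℝ) (hX : Xᵀ = -X) (t : ℝ) : orthogonalGroup m ℝ :=
  ⟨NormedSpace.exp (t • X), by
    rw [mem_orthogonalGroup_iff, ← exp_transpose, transpose_smul, hX, smul_neg,
      ← exp_add_of_commute _ _ (Commute.refl (t • X)).neg_right, add_neg_cancel,
      NormedSpace.exp_zero]⟩

lemma transpose_coe_skewRotation (X : Matrix m m ℝ) (hX : Xᵀ = -X) (t : ℝ) :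
    (skewRotation X hX t : Matrix m m ℝ)ᵀ = NormedSpace.exp (t • -X) := by
  rw [skewRotation, ← exp_transpose, transpose_smul, hX]

lemma skewRotation_add (X : Matrix m m ℝ) (hX : Xᵀ = -X) (s t : ℝ) :
    skewRotation X hX (s + t) = skewRotation X hX s * skewRotation X hX t := by
  refine Subtype.ext ?_
  change NormedSpace.exp ((s + t) • X) = NormedSpace.exp (s • X) * NormedSpace.exp (t • X)
  rw [add_smul]
  exact exp_add_of_commute _ _ (((Commute.refl X).smul_left s).smul_right t)

/-- The conjugate `U S Uᵀ`, i.e. the covariance `S` seen after the random rotation `U`. -/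
def rotated (S : Matrix m m ℝ) (U : orthogonalGroup m ℝ) : Matrix m m ℝ :=
  U * S * (U : Matrix m m ℝ)ᵀ

@[fun_prop]
lemma continuous_rotated (S : Matrix m m ℝ) : Continuous (rotated S) := by
  unfold rotated
  fun_prop

lemma rotated_mul (S : Matrix m m ℝ) (V U : orthogonalGroup m ℝ) :
    rotated S (V * U) = V * rotated S U * (V : Matrix m m ℝ)ᵀ := by
  simp [rotated, Matrix.mul_assoc]

lemma trace_rotated (S : Matrix m m ℝ) (U : orthogonalGroup m ℝ) :
    (rotated S U).trace = S.trace := by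
  rw [rotated, trace_mul_cycle, (mem_orthogonalGroup_iff' m ℝ).mp U.2, Matrix.one_mul]

open scoped Matrix.Norms.L2Operator in
lemma norm_rotated (S : Matrix m m ℝ) (U : orthogonalGroup m ℝ) : ‖rotated S U‖ = ‖S‖ :=
  (CStarRing.norm_mul_coe_unitary _ (star U)).trans (CStarRing.norm_coe_unitary_mul U S)

open scoped Matrix.Norms.L2Operator in
lemma hasDerivAt_trace_mul_rotated (N S : Matrix m m ℝ) {X : Matrix m m ℝ} (hX : Xᵀ = -X)
    (U : orthogonalGroup m ℝ) :
    HasDerivAt (fun t => (N * rotated S (skewRotation X hX t * U)).trace)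
      (⁅N, X⁆ * rotated S U).trace 0 := by
  have hexp (Z : Matrix m m ℝ) : HasDerivAt (fun t : ℝ => NormedSpace.exp (t • Z)) Z 0 := by
    simpa using hasDerivAt_exp_smul_const Z (0 : ℝ)
  have h := (((hexp X).mul_const (rotated S U)).mul (hexp (-X))).const_mul N
  have htr := (traceLinearMap m ℝ ℝ).toContinuousLinearMap.hasFDerivAt.comp_hasDerivAt (0 : ℝ) h
  have hval : (N * (X * rotated S U - rotated S U * X)).trace = (⁅N, X⁆ * rotated S U).trace := by
    rw [mul_sub, Ring.lie_def, sub_mul, trace_sub, trace_sub, Matrix.mul_assoc, Matrix.mul_assoc X,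
      trace_mul_comm X, Matrix.mul_assoc N (rotated S U)]
  simp only [rotated_mul, transpose_coe_skewRotation]
  rw [← hval]
  convert! htr using 1
  simp [sub_eq_add_neg]

end OrthogonalGroup

section PlaneGenerator

variable {m R : Type*} [DecidableEq m] [CommRing R]

/-- The infinitesimal generator of the rotations in the plane of the coordinates `i` and `j`. -/
def planeGenerator (R : Type*) [CommRing R] (i j : m) : Matrix m m R := single i j 1 - single j i 1

lemma transpose_planeGenerator (i j : m) :
    (planeGenerator R i j)ᵀ = -planeGenerator R i j := by
  simp [planeGenerator]

variable [Fintype m]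

lemma trace_planeGenerator_mul (i j : m) (B : Matrix m m R) :
    (planeGenerator R i j * B).trace = B j i - B i j := by
  simp [planeGenerator, sub_mul, trace_single_mul]

lemma sum_planeGenerator_mul_mul (P : Matrix m m R) :
    ∑ i, ∑ j, planeGenerator R i j * P * planeGenerator R i j =
      (2 : R) • Pᵀ - (2 * P.trace) • (1 : Matrix m m R) := by
  have hterm (i j : m) : planeGenerator R i j * P * planeGenerator R i j =
      single i j (Pᵀ i j) - single i i (P j j) - (single j j (P i i) - single j i (Pᵀ j i)) := by
    simp [planeGenerator, sub_mul, mul_sub, single_mul_mul_single]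
    abel
  have hdiag : ∑ i, ∑ j, single i i (P j j) = P.trace • (1 : Matrix m m R) := by
    rw [Finset.sum_comm, trace, Finset.sum_smul]
    exact Finset.sum_congr rfl fun j _ => by
      rw [sum_single_eq_diagonal, ← smul_one_eq_diagonal, diag_apply]
  have hdiag' : ∑ i, ∑ j, single j j (P i i) = P.trace • (1 : Matrix m m R) := by
    rw [Finset.sum_comm, hdiag]
  have htrans : ∑ i, ∑ j, single j i (Pᵀ j i) = Pᵀ := by
    rw [Finset.sum_comm, ← matrix_eq_sum_single]
  simp only [hterm, Finset.sum_sub_distrib, hdiag, hdiag', htrans, ← matrix_eq_sum_single]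
  module

lemma sum_lie_lie_planeGenerator {M : Matrix m m R} (hM : M.IsSymm) :
    ∑ i, ∑ j, ⁅⁅M, planeGenerator R i j⁆, planeGenerator R i j⁆ =
      (4 * M.trace) • (1 : Matrix m m R) - (4 * Fintype.card m : R) • M := by
  have hterm (X : Matrix m m R) :
      ⁅⁅M, X⁆, X⁆ = M * (X * X) + X * X * M - (2 : R) • (X * M * X) := by
    simp only [Ring.lie_def, two_smul]
    noncomm_ring
  have hsq : ∑ i, ∑ j, planeGenerator R i j * planeGenerator R i j =
      (2 - 2 * Fintype.card m : R) • (1 : Matrix m m R) := by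
    have h := sum_planeGenerator_mul_mul (1 : Matrix m m R)
    simp only [mul_one, transpose_one, trace_one] at h
    rw [h, sub_smul]
  simp only [hterm, Finset.sum_sub_distrib, Finset.sum_add_distrib, ← Finset.mul_sum,
    ← Finset.sum_mul, ← Finset.smul_sum, hsq, sum_planeGenerator_mul_mul, hM.eq, Matrix.mul_smul,
    smul_mul, mul_one, one_mul]
  module

end PlaneGenerator

section CentredTrace

variable {m : Type*} [Fintype m] [DecidableEq m]

/-- The fluctuation of `tr (M U S Uᵀ)` around its Haar mean `tr M tr S / m`. -/
noncomputable def centredTrace (M S : Matrix m m ℝ) (U : orthogonalGroup m ℝ) : ℝ :=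
  (M * rotated S U).trace - M.trace * S.trace / Fintype.card m

/-- The Stein kernel of `centredTrace M S`: the sum of its squared derivatives along the plane
rotations, normalised by the Casimir eigenvalue of traceless symmetric matrices. -/
noncomputable def centredTraceKernel (M S : Matrix m m ℝ) (U : orthogonalGroup m ℝ) : ℝ :=
  (∑ i, ∑ j, (⁅M, planeGenerator ℝ i j⁆ * rotated S U).trace ^ 2) / (4 * Fintype.card m)

lemma continuous_centredTrace (M S : Matrix m m ℝ) : Continuous (centredTrace M S) := by
  unfold centredTrace
  fun_prop

lemma continuous_centredTraceKernel (M S : Matrix m m ℝ) : Continuous (centredTraceKernel M S) := by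
  unfold centredTraceKernel
  fun_prop

lemma sum_trace_lie_lie_planeGenerator_mul_rotated [Nonempty m] {M : Matrix m m ℝ} (hM : M.IsSymm)
    (S : Matrix m m ℝ) (U : orthogonalGroup m ℝ) :
    ∑ i, ∑ j, (⁅⁅M, planeGenerator ℝ i j⁆, planeGenerator ℝ i j⁆ * rotated S U).trace =
      -(4 * Fintype.card m * centredTrace M S U) := by
  simp only [← trace_sum, ← Finset.sum_mul, sum_lie_lie_planeGenerator hM, sub_mul, smul_mul,
    one_mul, trace_sub, trace_smul, trace_rotated, centredTrace, smul_eq_mul]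
  field_simp
  ring

variable [MeasurableSpace (orthogonalGroup m ℝ)] [BorelSpace (orthogonalGroup m ℝ)]
  {μ : Measure (orthogonalGroup m ℝ)} [μ.IsMulLeftInvariant]

lemma integral_trace_lie_lie_mul_comp_centredTrace [IsFiniteMeasure μ] (M S : Matrix m m ℝ)
    {X : Matrix m m ℝ} (hX : Xᵀ = -X) {g : ℝ → ℝ} (hg : ContDiff ℝ 1 g) :
    ∫ U, (⁅⁅M, X⁆, X⁆ * rotated S U).trace * g (centredTrace M S U) ∂μ =
      -∫ U, (⁅M, X⁆ * rotated S U).trace ^ 2 * deriv g (centredTrace M S U) ∂μ := by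
  have hY := continuous_centredTrace M S
  have : Continuous (deriv g) := hg.continuous_deriv le_rfl
  have hγ0 : skewRotation X hX 0 = 1 := by simpa using skewRotation_add X hX 0 0
  have hdg (U : orthogonalGroup m ℝ) :
      HasDerivAt (fun t => g (centredTrace M S (skewRotation X hX t * U)))
        (deriv g (centredTrace M S U) * (⁅M, X⁆ * rotated S U).trace) 0 := by
    have hdY : HasDerivAt (fun t => centredTrace M S (skewRotation X hX t * U))
        (⁅M, X⁆ * rotated S U).trace 0 := (hasDerivAt_trace_mul_rotated M S hX U).sub_const _
    exact (hg.differentiable one_ne_zero _).hasDerivAt.comp_of_eq 0 hdY (by rw [hγ0, one_mul])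
  have hibp := integral_deriv_oneParameter_mul (μ := μ) (skewRotation_add X hX)
    (F := fun U => (⁅M, X⁆ * rotated S U).trace) (F' := fun U => (⁅⁅M, X⁆, X⁆ * rotated S U).trace)
    (by fun_prop) (by fun_prop) (hg.continuous.comp hY) (by fun_prop)
    (hasDerivAt_trace_mul_rotated ⁅M, X⁆ S hX) hdg
  refine hibp.trans ?_
  congr! 3 with U
  ring

lemma isSteinKernel_centredTrace [Nonempty m] [IsFiniteMeasure μ] {M : Matrix m m ℝ} (hM : M.IsSymm)
    (S : Matrix m m ℝ) : IsSteinKernel (centredTrace M S) (centredTraceKernel M S) μ := by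
  intro g hg
  have hY := continuous_centredTrace M S
  have : Continuous (deriv g) := hg.continuous_deriv le_rfl
  have hcard : (4 * Fintype.card m : ℝ) ≠ 0 := by positivity
  refine mul_left_cancel₀ hcard ?_
  calc 4 * Fintype.card m * ∫ U, centredTrace M S U * g (centredTrace M S U) ∂μ
      = -∫ U, ∑ i, ∑ j, (⁅⁅M, planeGenerator ℝ i j⁆, planeGenerator ℝ i j⁆ * rotated S U).trace *
          g (centredTrace M S U) ∂μ := by
        simp only [← Finset.sum_mul, sum_trace_lie_lie_planeGenerator_mul_rotated hM]
        rw [← integral_const_mul, ← integral_neg]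
        simp only [neg_mul, neg_neg, mul_assoc]
    _ = ∫ U, ∑ i, ∑ j, (⁅M, planeGenerator ℝ i j⁆ * rotated S U).trace ^ 2 *
          deriv g (centredTrace M S U) ∂μ := by
        rw [integral_finsetSum _ fun i _ => integrable_of_continuous (by fun_prop),
          integral_finsetSum _ fun i _ => integrable_of_continuous (by fun_prop),
          ← Finset.sum_neg_distrib]
        refine Finset.sum_congr rfl fun i _ => ?_
        rw [integral_finsetSum _ fun j _ => integrable_of_continuous (by fun_prop),
          integral_finsetSum _ fun j _ => integrable_of_continuous (by fun_prop),
          ← Finset.sum_neg_distrib]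
        refine Finset.sum_congr rfl fun j _ => ?_
        rw [integral_trace_lie_lie_mul_comp_centredTrace M S (transpose_planeGenerator i j) hg,
          neg_neg]
    _ = 4 * Fintype.card m *
          ∫ U, centredTraceKernel M S U * deriv g (centredTrace M S U) ∂μ := by
        simp only [← Finset.sum_mul]
        rw [← integral_const_mul]
        simp only [centredTraceKernel, ← mul_assoc, mul_div_cancel₀ _ hcard]

end CentredTrace

section Frobenius

variable {k l m : Type*} [Fintype k] [Fintype l] [Fintype m]

/-- The squared Frobenius norm. It is written out as a sum because `‖·‖` denotes the operator norm
throughout. -/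
def frobeniusSq (B : Matrix k l ℝ) : ℝ := ∑ i, ∑ j, B i j ^ 2

lemma frobeniusSq_transpose (B : Matrix k l ℝ) : frobeniusSq Bᵀ = frobeniusSq B :=
  Finset.sum_comm

lemma trace_mul_transpose_self (B : Matrix k l ℝ) : (B * Bᵀ).trace = frobeniusSq B := by
  simp [frobeniusSq, trace, mul_apply, pow_two]

lemma frobeniusSq_sub_le (B C : Matrix k l ℝ) :
    frobeniusSq (B - C) ≤ 2 * (frobeniusSq B + frobeniusSq C) := by
  simp only [frobeniusSq, ← Finset.sum_add_distrib, Finset.mul_sum, Matrix.sub_apply]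
  gcongr with i _ j _
  linarith [sq_nonneg (B i j + C i j)]

lemma frobeniusSq_transpose_sub_self_le (B : Matrix k k ℝ) :
    frobeniusSq (Bᵀ - B) ≤ 4 * frobeniusSq B := by
  linarith [frobeniusSq_sub_le Bᵀ B, frobeniusSq_transpose B]

lemma frobeniusSq_transpose_mul_self (A : Matrix k l ℝ) :
    frobeniusSq (Aᵀ * A) = frobeniusSq (A * Aᵀ) := by
  simp only [← trace_mul_transpose_self, transpose_mul, transpose_transpose]
  rw [Matrix.mul_assoc, trace_mul_comm]
  simp only [Matrix.mul_assoc]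

lemma sum_trace_lie_planeGenerator_mul_sq_le [DecidableEq m] (M P : Matrix m m ℝ) :
    ∑ i, ∑ j, (⁅M, planeGenerator ℝ i j⁆ * P).trace ^ 2 ≤ 4 * frobeniusSq ⁅P, M⁆ := by
  have hentry (i j : m) :
      (⁅M, planeGenerator ℝ i j⁆ * P).trace = (⁅P, M⁆ᵀ - ⁅P, M⁆) i j := by
    rw [Matrix.sub_apply, transpose_apply, ← trace_planeGenerator_mul]
    simp only [Ring.lie_def, sub_mul, mul_sub, trace_sub, ← mul_assoc]
    rw [← trace_mul_cycle _ P M]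
  simp only [hentry]
  exact frobeniusSq_transpose_sub_self_le ⁅P, M⁆

open scoped Matrix.Norms.L2Operator

lemma frobeniusSq_mul_le_norm_sq_left [DecidableEq l] (A : Matrix k l ℝ) (B : Matrix l m ℝ) :
    frobeniusSq (A * B) ≤ ‖A‖ ^ 2 * frobeniusSq B := by
  have hcol (j : m) : ∑ i, (A * B) i j ^ 2 ≤ ‖A‖ ^ 2 * ∑ i, B i j ^ 2 := by
    have h := pow_le_pow_left₀ (norm_nonneg _) (l2_opNorm_mulVec A (WithLp.toLp 2 (B.col j))) 2
    rw [mul_pow, EuclideanSpace.real_norm_sq_eq, EuclideanSpace.real_norm_sq_eq] at h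
    exact h
  calc frobeniusSq (A * B) = ∑ j, ∑ i, (A * B) i j ^ 2 := Finset.sum_comm
    _ ≤ ∑ j, ‖A‖ ^ 2 * ∑ i, B i j ^ 2 := by gcongr with j; exact hcol j
    _ = ‖A‖ ^ 2 * frobeniusSq B := by rw [← Finset.mul_sum, frobeniusSq, Finset.sum_comm]

lemma frobeniusSq_mul_le_norm_sq_right [DecidableEq m] (A : Matrix k l ℝ) (B : Matrix l m ℝ) :
    frobeniusSq (A * B) ≤ ‖B‖ ^ 2 * frobeniusSq A := by
  classical
  rw [← frobeniusSq_transpose, transpose_mul, ← frobeniusSq_transpose A,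
    ← l2_opNorm_conjTranspose B, conjTranspose_eq_transpose_of_trivial]
  exact frobeniusSq_mul_le_norm_sq_left Bᵀ Aᵀ

lemma frobeniusSq_le_card_mul [DecidableEq l] (A : Matrix k l ℝ) :
    frobeniusSq A ≤ Fintype.card l * ‖A‖ ^ 2 := by
  simpa [frobeniusSq, one_apply, mul_comm] using
    frobeniusSq_mul_le_norm_sq_left A (1 : Matrix l l ℝ)

variable [DecidableEq m]

lemma frobeniusSq_lie_le (A B : Matrix m m ℝ) :
    frobeniusSq ⁅A, B⁆ ≤ 4 * ‖A‖ ^ 2 * frobeniusSq B := by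
  rw [Ring.lie_def]
  linarith [frobeniusSq_sub_le (A * B) (B * A), frobeniusSq_mul_le_norm_sq_left A B,
    frobeniusSq_mul_le_norm_sq_right B A]

lemma centredTraceKernel_mem_Icc (M S : Matrix m m ℝ) (U : orthogonalGroup m ℝ) :
    centredTraceKernel M S U ∈ Set.Icc 0 (4 * ‖S‖ ^ 2 * frobeniusSq M / Fintype.card m) := by
  have hsum := (sum_trace_lie_planeGenerator_mul_sq_le M (rotated S U)).trans
    (mul_le_mul_of_nonneg_left (frobeniusSq_lie_le (rotated S U) M) zero_le_four)
  rw [norm_rotated] at hsum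
  refine ⟨div_nonneg (by positivity) (by positivity), ?_⟩
  rw [centredTraceKernel, ← mul_div_mul_left _ (Fintype.card m : ℝ) four_ne_zero]
  gcongr

end Frobenius

section Concentration

open scoped Matrix.Norms.L2Operator

variable {m n : Type*} [Fintype m] [DecidableEq m] [Fintype n]

lemma trace_condition_error_eq (S : Matrix m m ℝ) (A : Matrix n m ℝ) (U : orthogonalGroup m ℝ) :
    (A * (U : Matrix m m ℝ) * S * (U : Matrix m m ℝ)ᵀ * Aᵀ).trace / Fintype.card n -
        S.trace / Fintype.card m * ((A * Aᵀ).trace / Fintype.card n) =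
      centredTrace (Aᵀ * A) S U / Fintype.card n := by
  have htr : (A * (U : Matrix m m ℝ) * S * (U : Matrix m m ℝ)ᵀ * Aᵀ).trace =
      (Aᵀ * A * rotated S U).trace := by
    rw [trace_mul_comm, rotated]
    simp only [Matrix.mul_assoc]
  rw [htr, centredTrace, trace_mul_comm A]
  ring

variable [DecidableEq n]

lemma abs_centredTrace_div_card_le {S : Matrix m m ℝ} {A : Matrix n m ℝ}
    {U : orthogonalGroup m ℝ} {ε : ℝ} (hε : 0 < ε)
    (h : centredTrace (Aᵀ * A) S U ^ 2 ≤ 4 * ε ^ 2 * ‖S‖ ^ 2 * frobeniusSq (Aᵀ * A)) :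
    |centredTrace (Aᵀ * A) S U / Fintype.card n| ≤ 2 * ε * ‖S‖ * ‖A * Aᵀ‖ := by
  have hcard : (Fintype.card n : ℝ) ≤ (Fintype.card n : ℝ) ^ 2 := by
    exact_mod_cast Nat.le_self_pow two_ne_zero _
  have hsq : centredTrace (Aᵀ * A) S U ^ 2 ≤ (2 * ε * ‖S‖ * ‖A * Aᵀ‖ * Fintype.card n) ^ 2 := by
    calc centredTrace (Aᵀ * A) S U ^ 2
        ≤ 4 * ε ^ 2 * ‖S‖ ^ 2 * frobeniusSq (A * Aᵀ) := by rwa [← frobeniusSq_transpose_mul_self]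
      _ ≤ 4 * ε ^ 2 * ‖S‖ ^ 2 * (Fintype.card n ^ 2 * ‖A * Aᵀ‖ ^ 2) := by
          gcongr
          exact (frobeniusSq_le_card_mul _).trans (by gcongr)
      _ = (2 * ε * ‖S‖ * ‖A * Aᵀ‖ * Fintype.card n) ^ 2 := by ring
  rw [abs_div, Nat.abs_cast]
  exact div_le_of_le_mul₀ (by positivity) (by positivity) (abs_le_of_sq_le_sq hsq (by positivity))

variable [Nonempty m] [MeasurableSpace (orthogonalGroup m ℝ)] [BorelSpace (orthogonalGroup m ℝ)]

theorem measureReal_lt_centredTrace_sq_le (μ : Measure (orthogonalGroup m ℝ))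
    [IsProbabilityMeasure μ] [μ.IsMulLeftInvariant] {M : Matrix m m ℝ} (hM : M.IsSymm)
    (S : Matrix m m ℝ) {ε : ℝ} (hε : 0 < ε) :
    μ.real {U | 4 * ε ^ 2 * ‖S‖ ^ 2 * frobeniusSq M < centredTrace M S U ^ 2} ≤
      Real.exp (-(Fintype.card m * ε ^ 2 / 4)) := by
  have hY := continuous_centredTrace M S
  obtain ⟨B, hB⟩ := isCompact_univ.exists_bound_of_continuousOn hY.continuousOn
  have h := (isSteinKernel_centredTrace (μ := μ) hM S).measureReal_lt_sq_le hY.aemeasurable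
    (.of_forall fun U => hB U (Set.mem_univ U)) (continuous_centredTraceKernel M S).aemeasurable
    (.of_forall fun U => centredTraceKernel_mem_Icc M S U)
    (r := Fintype.card m * ε ^ 2) (by positivity)
  convert h using 5
  field_simp

theorem trace_condition_concentration_general (μ : Measure (orthogonalGroup m ℝ))
    [IsProbabilityMeasure μ] [μ.IsMulLeftInvariant] (S : Matrix m m ℝ) (A : Matrix n m ℝ) {ε : ℝ}
    (hε : 0 < ε) :
    ENNReal.ofReal (1 - Real.exp (-(Fintype.card m * ε ^ 2 / 4))) ≤
      μ {U | |(A * (U : Matrix m m ℝ) * S * (U : Matrix m m ℝ)ᵀ * Aᵀ).trace / Fintype.card n -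
          S.trace / Fintype.card m * ((A * Aᵀ).trace / Fintype.card n)| ≤
        2 * ε * ‖S‖ * ‖A * Aᵀ‖} := by
  simp only [trace_condition_error_eq]
  have hsymm : (Aᵀ * A).IsSymm := by rw [IsSymm, transpose_mul, transpose_transpose]
  have hmeas : MeasurableSet
      {U | 4 * ε ^ 2 * ‖S‖ ^ 2 * frobeniusSq (Aᵀ * A) < centredTrace (Aᵀ * A) S U ^ 2} :=
    measurableSet_lt measurable_const ((continuous_centredTrace _ S).measurable.pow_const 2)
  refine (ENNReal.ofReal_le_ofReal (sub_le_sub_left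
    (measureReal_lt_centredTrace_sq_le μ hsymm S hε) 1)).trans ?_
  rw [← probReal_compl_eq_one_sub hmeas, ofReal_measureReal]
  exact measure_mono fun U hU => abs_centredTrace_div_card_le hε (not_lt.mp hU)

end Concentration

/-- Corollary of the supplementary material (concentration of measure for a
randomly rotated mechanism): there is a universal constant `κ > 0` such that for
every `m ≥ 2`, symmetric positive semidefinite `Σ`, matrix `A` and `ε > 0`, a
Haar-distributed orthogonal `U` satisfies
`|τ_n(A U Σ Uᵀ Aᵀ) - τ_m(Σ) τ_n(A Aᵀ)| ≤ 2ε ‖Σ‖ ‖A Aᵀ‖`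
with probability at least `1 - exp(-κ (m-1) ε²)`. -/
theorem trace_condition_concentration :
    ∃ κ : ℝ, 0 < κ ∧
      ∀ (m n : ℕ), 2 ≤ m →
      ∀ S : Matrix (Fin m) (Fin m) ℝ, S.IsSymm → S.PosSemidef →
      ∀ (A : Matrix (Fin n) (Fin m) ℝ) (ε : ℝ), 0 < ε →
      let _i : MeasurableSpace (Matrix.orthogonalGroup (Fin m) ℝ) := borel _
      ∀ μ : Measure (Matrix.orthogonalGroup (Fin m) ℝ),
        μ.IsHaarMeasure → IsProbabilityMeasure μ →
        ENNReal.ofReal (1 - Real.exp (-κ * ((m : ℝ) - 1) * ε ^ 2)) ≤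
          μ {U : Matrix.orthogonalGroup (Fin m) ℝ |
              abs ((A * (U : Matrix (Fin m) (Fin m) ℝ) * S *
                    (U : Matrix (Fin m) (Fin m) ℝ)ᵀ * Aᵀ).trace / (n : ℝ) -
                  (S.trace / (m : ℝ)) * ((A * Aᵀ).trace / (n : ℝ))) ≤
                2 * ε * matrixOpNorm S * matrixOpNorm (A * Aᵀ)} := by
  refine ⟨1 / 4, by norm_num, fun m n hm S _ _ A ε hε => ?_⟩
  intro _ μ _ _
  have : BorelSpace (orthogonalGroup (Fin m) ℝ) := ⟨rfl⟩
  have : NeZero m := ⟨by omega⟩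
  have h := trace_condition_concentration_general μ S A hε
  rw [Fintype.card_fin, Fintype.card_fin] at h
  refine le_trans ?_ h
  gcongr
  linarith [sq_nonneg ε]
end

section
/- There exists a constant κ > 0, independent of all other data, such that the following holds: for every m ≥ 2, every C : ℤ → ℝ with C(−k) = C(k) for all k, Σ_{k∈ℤ} |C(k)| < ∞, C(0) > 0, and with nonnegative spectral density, i.e. S(ν) := Σ_{k∈ℤ} C(k)·cos(2π·k·ν) ≥ 0 for all ν ∈ [−1/2, 1/2], every nonzero vector b ∈ ℝ^m, and every ε > 0, if Σ denotes the m × m Toeplitz matrix with entries Σ_{jk} = C(j − k) and U is drawn from the Haar probability measure on the orthogonal group O(m), then with probability at least 1 − exp(−κ·(m−1)·ε²) one has |bᵀ·U·Σ·Uᵀ·b / (C(0)·‖b‖²) − 1| ≤ (2ε / C(0)) · sup_{ν ∈ [−1/2,1/2]} S(ν), where ‖b‖² = Σ_i b_i². -/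
open MeasureTheory Matrix
open ProbabilityTheory
open scoped RealInnerProductSpace

/-!
Since `Uᵀb / ‖b‖` is uniform on the sphere, the theorem is about the quadratic form
`q(x) = xᵀ(Σ - C(0))x` at a uniform unit vector. This form is traceless, and the Toeplitz formula
`xᵀΣx = ∫ S(ν) |x̂(ν)|² dν` bounds it by `L ‖x‖²` with `L = sup S`. What has to be shown is that a
traceless form on `ℝⁿ` bounded by `L` satisfies `|q| ≤ s` with probability at least
`1 - exp (-κ u²)`, where `u = s √n / L`.

For large `u`, a uniform unit vector is the direction of a Gaussian vector, and Markov's inequality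
for the exponential moments of a quadratic form of a Gaussian gives the tail `2 exp (-u² / 16)`.

For small `u` that tail bound is empty because of the factor `2`, and one needs instead a small ball
estimate: `|q| ≤ s` with probability at least a multiple of `u`. Two independent uniform points
`x`, `y` satisfy `q(x) ≥ 0 ≥ q(y)` with probability bounded below, by comparing the first and second
moments of the exponential. Then `q` vanishes somewhere on the great circle through them. Along the
circle `q` is a trigonometric polynomial in the doubled angle whose Lipschitz constant is typically
`O(L / √n)`, so `|q| ≤ s` at one of `O(1 / u)` equally spaced points of the circle. Each of these
points is uniform on the sphere, and a union bound over them concludes.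
-/

lemma abs_log_inv_one_sub_sub_le {y : ℝ} (hy : |y| ≤ 1 / 2) :
    |Real.log (1 - y)⁻¹ - (y + y ^ 2 / 2 + y ^ 3 / 3 + y ^ 4 / 4)| ≤ y ^ 4 := by
  have htaylor := Real.abs_log_sub_add_sum_range_le (x := y) (hy.trans_lt (by norm_num)) 4
  have hseries : (∑ i ∈ Finset.range 4, y ^ (i + 1) / (i + 1)) + Real.log (1 - y) =
      -(Real.log (1 - y)⁻¹ - (y + y ^ 2 / 2 + y ^ 3 / 3 + y ^ 4 / 4)) := by
    rw [Real.log_inv]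
    simp only [Finset.sum_range_succ, Finset.sum_range_zero]
    push_cast
    ring
  rw [hseries, abs_neg] at htaylor
  refine htaylor.trans ?_
  rw [div_le_iff₀ (by linarith), pow_succ, ← abs_pow, abs_of_nonneg (by positivity)]
  exact mul_le_mul_of_nonneg_left (by linarith) (by positivity)

lemma inv_one_sub_le_exp {y : ℝ} (hy : |y| ≤ 1 / 2) :
    (1 - y)⁻¹ ≤ Real.exp (y + y ^ 2) := by
  obtain ⟨hlower, hupper⟩ := abs_le.1 hy
  rw [← Real.log_le_iff_le_exp (by rw [inv_pos]; linarith)]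
  have hcubic : y ^ 3 ≤ y ^ 2 / 2 := by nlinarith [sq_nonneg y]
  have hquartic : y ^ 4 ≤ y ^ 2 / 4 := by nlinarith [sq_nonneg y]
  linarith [(abs_le.1 (abs_log_inv_one_sub_sub_le hy)).2, sq_nonneg y]

lemma exp_le_inv_one_sub {y : ℝ} (hy : |y| ≤ 1 / 2) :
    Real.exp (y + y ^ 2 / 8) ≤ (1 - y)⁻¹ := by
  obtain ⟨hlower, hupper⟩ := abs_le.1 hy
  rw [← Real.le_log_iff_exp_le (by rw [inv_pos]; linarith)]
  have hcubic : -(y ^ 2 / 2) ≤ y ^ 3 := by nlinarith [sq_nonneg y]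
  have hquartic : y ^ 4 ≤ y ^ 2 / 4 := by nlinarith [sq_nonneg y]
  linarith [(abs_le.1 (abs_log_inv_one_sub_sub_le hy)).1, sq_nonneg y]

lemma gaussianPDFReal_mul_exp_mul_sq (a x : ℝ) :
    gaussianPDFReal 0 1 x * Real.exp (a * x ^ 2) =
      (√(2 * Real.pi))⁻¹ * Real.exp (-(1 / 2 - a) * x ^ 2) := by
  rw [gaussianPDFReal, mul_assoc, ← Real.exp_add, NNReal.coe_one, mul_one]
  ring_nf

lemma integrable_exp_mul_sq_gaussianReal {a : ℝ} (ha : 2 * a < 1) :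
    Integrable (fun x : ℝ => Real.exp (a * x ^ 2)) (gaussianReal 0 1) := by
  rw [gaussianReal_of_var_ne_zero _ one_ne_zero,
    integrable_withDensity_iff (measurable_gaussianPDF _ _) (by simp [gaussianPDF])]
  simp_rw [toReal_gaussianPDF, mul_comm _ (gaussianPDFReal 0 1 _), gaussianPDFReal_mul_exp_mul_sq]
  exact (integrable_exp_neg_mul_sq (by linarith)).const_mul _

lemma integral_exp_mul_sq_gaussianReal {a : ℝ} (ha : 2 * a < 1) :
    ∫ x : ℝ, Real.exp (a * x ^ 2) ∂(gaussianReal 0 1) = √((1 - 2 * a)⁻¹) := by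
  simp_rw [integral_gaussianReal_eq_integral_smul one_ne_zero, smul_eq_mul,
    gaussianPDFReal_mul_exp_mul_sq]
  rw [integral_const_mul, integral_gaussian, ← Real.sqrt_inv, ← Real.sqrt_mul (by positivity)]
  congr 1
  have : 1 - 2 * a ≠ 0 := by linarith
  have : 1 / 2 - a ≠ 0 := by linarith
  field_simp

lemma sq_div_le_measureReal_nonneg_of_le_integral_exp {Ω : Type*} [MeasurableSpace Ω]
    {P : Measure Ω} [IsProbabilityMeasure P] {Z : Ω → ℝ} {δ K : ℝ} (hZ : Measurable Z)
    (hint : Integrable (fun ω => Real.exp (Z ω)) P)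
    (hint₂ : Integrable (fun ω => Real.exp (2 * Z ω)) P) (hδ : 0 < δ) (hK : 0 < K)
    (hlower : 1 + δ ≤ ∫ ω, Real.exp (Z ω) ∂P) (hupper : ∫ ω, Real.exp (2 * Z ω) ∂P ≤ K) :
    δ ^ 2 / K ≤ P.real {ω | 0 ≤ Z ω} := by
  set A := {ω | 0 ≤ Z ω}
  have hA : MeasurableSet A := measurableSet_le measurable_const hZ
  have hA_int : Integrable (A.indicator fun _ => K / (2 * δ)) P :=
    (integrable_const _).indicator hA
  have hsum_int : Integrable (fun ω => 1 + A.indicator (fun _ => K / (2 * δ)) ω) P :=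
    (integrable_const 1).add hA_int
  -- On `A` this is AM-GM, weighted so that the last term integrates to at most `δ / 2`.
  have hpointwise (ω : Ω) : Real.exp (Z ω) ≤
      1 + A.indicator (fun _ => K / (2 * δ)) ω + δ / (2 * K) * Real.exp (2 * Z ω) := by
    have hexp : Real.exp (2 * Z ω) = Real.exp (Z ω) ^ 2 := by rw [← Real.exp_nat_mul]; norm_num
    by_cases hω : ω ∈ A
    · have hsq : 0 ≤ (δ / (2 * K)) * (Real.exp (Z ω) - K / δ) ^ 2 := by positivity
      have hexpand : δ / (2 * K) * (Real.exp (Z ω) - K / δ) ^ 2 =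
          K / (2 * δ) + δ / (2 * K) * Real.exp (Z ω) ^ 2 - Real.exp (Z ω) := by
        field_simp
        ring
      rw [Set.indicator_of_mem hω, hexp]
      linarith
    · have hneg : Real.exp (Z ω) ≤ 1 := Real.exp_le_one_iff.2 (not_le.1 hω).le
      rw [Set.indicator_of_notMem hω, add_zero]
      exact hneg.trans (le_add_of_nonneg_right (by positivity))
  have hint_le := integral_mono hint (hsum_int.add (hint₂.const_mul (δ / (2 * K)))) hpointwise
  simp only [Pi.add_apply] at hint_le
  rw [integral_add hsum_int (hint₂.const_mul _), integral_add (integrable_const 1) hA_int,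
    integral_indicator_const _ hA, integral_const_mul, integral_const, probReal_univ, one_smul,
    smul_eq_mul] at hint_le
  have hsecond : δ / (2 * K) * ∫ ω, Real.exp (2 * Z ω) ∂P ≤ δ / 2 := by
    calc δ / (2 * K) * ∫ ω, Real.exp (2 * Z ω) ∂P ≤ δ / (2 * K) * K := by gcongr
      _ = δ / 2 := by field_simp
  have hmain : δ / 2 ≤ P.real A * (K / (2 * δ)) := by linarith
  calc δ ^ 2 / K = δ / 2 / (K / (2 * δ)) := by field_simp
    _ ≤ P.real A := (div_le_iff₀ (by positivity)).2 hmain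

section SymmetricOperator

variable {E : Type*} [NormedAddCommGroup E] [InnerProductSpace ℝ E] [FiniteDimensional ℝ E]
  {T : E →ₗ[ℝ] E}

lemma inner_map_self_eq_sum_eigenvalues (hT : T.IsSymmetric) (x : E) :
    ⟪T x, x⟫ = ∑ i, hT.eigenvalues rfl i * ⟪hT.eigenvectorBasis rfl i, x⟫ ^ 2 := by
  rw [← (hT.eigenvectorBasis rfl).sum_inner_mul_inner (T x) x]
  refine Finset.sum_congr rfl fun i _ => ?_
  rw [hT, hT.apply_eigenvectorBasis, RCLike.ofReal_real_eq_id, id, inner_smul_right,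
    real_inner_comm]
  ring

lemma inner_map_sum_smul_eigenvectorBasis (hT : T.IsSymmetric)
    (c : Fin (Module.finrank ℝ E) → ℝ) :
    ⟪T (∑ i, c i • hT.eigenvectorBasis rfl i), ∑ i, c i • hT.eigenvectorBasis rfl i⟫ =
      ∑ i, hT.eigenvalues rfl i * c i ^ 2 := by
  rw [inner_map_self_eq_sum_eigenvalues hT]
  simp [inner_sum, inner_smul_right, OrthonormalBasis.inner_eq_ite]

lemma trace_eq_sum_eigenvalues (hT : T.IsSymmetric) :
    LinearMap.trace ℝ E T = ∑ i, hT.eigenvalues rfl i :=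
  hT.trace_eq_sum_eigenvalues rfl

lemma trace_mul_self_eq_sum_eigenvalues_sq (hT : T.IsSymmetric) :
    LinearMap.trace ℝ E (T * T) = ∑ i, hT.eigenvalues rfl i ^ 2 := by
  rw [LinearMap.trace_eq_sum_inner _ (hT.eigenvectorBasis rfl)]
  refine Finset.sum_congr rfl fun i _ => ?_
  simp [hT.apply_eigenvectorBasis, inner_smul_right, sq]

lemma abs_eigenvalues_le (hT : T.IsSymmetric) {L : ℝ} (hL : ∀ x, |⟪T x, x⟫| ≤ L * ‖x‖ ^ 2)
    (i : Fin (Module.finrank ℝ E)) : |hT.eigenvalues rfl i| ≤ L := by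
  simpa [hT.apply_eigenvectorBasis, inner_smul_left] using hL (hT.eigenvectorBasis rfl i)

lemma abs_two_mul_eigenvalues_le (hT : T.IsSymmetric)
    (hbound : ∀ x, |⟪T x, x⟫| ≤ 1 / 4 * ‖x‖ ^ 2) (i : Fin (Module.finrank ℝ E)) :
    |2 * hT.eigenvalues rfl i| ≤ 1 / 2 := by
  rw [abs_mul, abs_two]
  linarith [abs_eigenvalues_le hT hbound i]

lemma trace_mul_self_le (hT : T.IsSymmetric) {L : ℝ} (hL : ∀ x, |⟪T x, x⟫| ≤ L * ‖x‖ ^ 2) :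
    LinearMap.trace ℝ E (T * T) ≤ Module.finrank ℝ E * L ^ 2 := by
  rw [trace_mul_self_eq_sum_eigenvalues_sq hT]
  refine (Finset.sum_le_card_nsmul _ _ (L ^ 2) fun i _ => ?_).trans_eq (by simp)
  exact sq_le_sq.2 ((abs_eigenvalues_le hT hL i).trans (le_abs_self L))

lemma trace_mul_self_nonneg (hT : T.IsSymmetric) : 0 ≤ LinearMap.trace ℝ E (T * T) := by
  rw [trace_mul_self_eq_sum_eigenvalues_sq hT]
  positivity

lemma abs_inner_map_self_le_sqrt_trace (hT : T.IsSymmetric) (x : E) :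
    |⟪T x, x⟫| ≤ √(LinearMap.trace ℝ E (T * T)) * ‖x‖ ^ 2 := by
  have heigenvalue (i) : |hT.eigenvalues rfl i| ≤ √(LinearMap.trace ℝ E (T * T)) := by
    rw [trace_mul_self_eq_sum_eigenvalues_sq hT]
    exact Real.abs_le_sqrt (Finset.single_le_sum (f := fun j => hT.eigenvalues rfl j ^ 2)
      (fun j _ => sq_nonneg _) (Finset.mem_univ i))
  rw [inner_map_self_eq_sum_eigenvalues hT, ← (hT.eigenvectorBasis rfl).sum_sq_inner_right x,
    Finset.mul_sum]
  refine (Finset.abs_sum_le_sum_abs _ _).trans (Finset.sum_le_sum fun i _ => ?_)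
  rw [abs_mul, abs_of_nonneg (sq_nonneg ⟪_, x⟫)]
  gcongr
  exact heigenvalue i

lemma continuous_inner_map_self (T : E →ₗ[ℝ] E) : Continuous fun x => ⟪T x, x⟫ :=
  T.continuous_of_finiteDimensional.inner continuous_id

lemma trace_smul_sub_smul_one (T : E →ₗ[ℝ] E) (t s : ℝ) :
    LinearMap.trace ℝ E (t • (T - s • 1)) =
      t * (LinearMap.trace ℝ E T - s * Module.finrank ℝ E) := by
  simp [LinearMap.trace_one]

lemma trace_smul_sub_smul_one_mul_self (T : E →ₗ[ℝ] E) (t s : ℝ) :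
    LinearMap.trace ℝ E ((t • (T - s • 1)) * (t • (T - s • 1))) =
      t ^ 2 * (LinearMap.trace ℝ E (T * T) - 2 * s * LinearMap.trace ℝ E T +
        s ^ 2 * Module.finrank ℝ E) := by
  have hexpand : (t • (T - s • 1)) * (t • (T - s • 1)) =
      t ^ 2 • (T * T - (2 * s) • T + s ^ 2 • 1) := by
    ext x
    simp only [Module.End.mul_apply, LinearMap.smul_apply, LinearMap.sub_apply,
      LinearMap.add_apply, Module.End.one_apply, map_smul, map_sub]
    module
  rw [hexpand]
  simp only [map_smul, map_add, map_sub, LinearMap.trace_one, smul_eq_mul]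

variable [MeasurableSpace E] [BorelSpace E]

lemma measurable_inner_map_self (T : E →ₗ[ℝ] E) : Measurable fun x => ⟪T x, x⟫ :=
  (continuous_inner_map_self T).measurable

lemma integrable_exp_inner_map_self (hT : T.IsSymmetric)
    (hlt : ∀ i, 2 * hT.eigenvalues rfl i < 1) :
    Integrable (fun x => Real.exp ⟪T x, x⟫) (stdGaussian E) := by
  rw [stdGaussian_eq_map_pi_orthonormalBasis (hT.eigenvectorBasis rfl), integrable_map_measure
    (continuous_inner_map_self T).rexp.aestronglyMeasurable (Measurable.aemeasurable (by fun_prop))]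
  refine (Integrable.fintype_prod fun i =>
    integrable_exp_mul_sq_gaussianReal (hlt i)).congr (ae_of_all _ fun x => ?_)
  simp only [Function.comp_apply, inner_map_sum_smul_eigenvectorBasis hT, Real.exp_sum]

lemma integral_exp_inner_map_self (hT : T.IsSymmetric)
    (hlt : ∀ i, 2 * hT.eigenvalues rfl i < 1) :
    ∫ x, Real.exp ⟪T x, x⟫ ∂(stdGaussian E) = ∏ i, √((1 - 2 * hT.eigenvalues rfl i)⁻¹) := by
  rw [stdGaussian_eq_map_pi_orthonormalBasis (hT.eigenvectorBasis rfl), integral_map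
    (Measurable.aemeasurable (by fun_prop)) (continuous_inner_map_self T).rexp.aestronglyMeasurable]
  simp_rw [← fun i => integral_exp_mul_sq_gaussianReal (hlt i)]
  rw [← integral_fintype_prod_eq_prod]
  refine integral_congr_ae (ae_of_all _ fun x => ?_)
  simp only [inner_map_sum_smul_eigenvectorBasis hT, Real.exp_sum]

lemma integrable_exp_inner_map_self_of_abs_le (hT : T.IsSymmetric)
    (hbound : ∀ x, |⟪T x, x⟫| ≤ 1 / 4 * ‖x‖ ^ 2) :
    Integrable (fun x => Real.exp ⟪T x, x⟫) (stdGaussian E) :=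
  integrable_exp_inner_map_self hT fun i => by
    linarith [(abs_le.1 (abs_eigenvalues_le hT hbound i)).2]

lemma integral_exp_inner_map_self_le (hT : T.IsSymmetric)
    (hbound : ∀ x, |⟪T x, x⟫| ≤ 1 / 4 * ‖x‖ ^ 2) :
    ∫ x, Real.exp ⟪T x, x⟫ ∂(stdGaussian E) ≤
      Real.exp (LinearMap.trace ℝ E T + 2 * LinearMap.trace ℝ E (T * T)) := by
  have hsmall := abs_two_mul_eigenvalues_le hT hbound
  rw [integral_exp_inner_map_self hT fun i => by linarith [(abs_le.1 (hsmall i)).2],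
    trace_eq_sum_eigenvalues hT, trace_mul_self_eq_sum_eigenvalues_sq hT, Finset.mul_sum,
    ← Finset.sum_add_distrib, Real.exp_sum]
  refine Finset.prod_le_prod (fun i _ => Real.sqrt_nonneg _) fun i _ => ?_
  rw [Real.sqrt_le_left (Real.exp_pos _).le, ← Real.exp_nat_mul]
  refine (inv_one_sub_le_exp (hsmall i)).trans_eq ?_
  push_cast
  ring_nf

lemma le_integral_exp_inner_map_self (hT : T.IsSymmetric)
    (hbound : ∀ x, |⟪T x, x⟫| ≤ 1 / 4 * ‖x‖ ^ 2) :
    Real.exp (LinearMap.trace ℝ E T + LinearMap.trace ℝ E (T * T) / 4) ≤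
      ∫ x, Real.exp ⟪T x, x⟫ ∂(stdGaussian E) := by
  have hsmall := abs_two_mul_eigenvalues_le hT hbound
  rw [integral_exp_inner_map_self hT fun i => by linarith [(abs_le.1 (hsmall i)).2],
    trace_eq_sum_eigenvalues hT, trace_mul_self_eq_sum_eigenvalues_sq hT, Finset.sum_div,
    ← Finset.sum_add_distrib, Real.exp_sum]
  refine Finset.prod_le_prod (fun i _ => (Real.exp_pos _).le) fun i _ => ?_
  refine Real.le_sqrt_of_sq_le ?_
  rw [← Real.exp_nat_mul]
  refine le_trans (le_of_eq ?_) (exp_le_inv_one_sub (hsmall i))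
  push_cast
  ring_nf

lemma stdGaussian_real_inner_map_self_nonneg_le (hT : T.IsSymmetric)
    (hbound : ∀ x, |⟪T x, x⟫| ≤ 1 / 4 * ‖x‖ ^ 2) :
    (stdGaussian E).real {x | 0 ≤ ⟪T x, x⟫} ≤
      Real.exp (LinearMap.trace ℝ E T + 2 * LinearMap.trace ℝ E (T * T)) := by
  have hmarkov := mul_meas_ge_le_integral_of_nonneg (μ := stdGaussian E)
    (ae_of_all _ fun x => (Real.exp_pos ⟪T x, x⟫).le)
    (integrable_exp_inner_map_self_of_abs_le hT hbound) 1
  simp only [Real.one_le_exp_iff, one_mul] at hmarkov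
  exact hmarkov.trans (integral_exp_inner_map_self_le hT hbound)

theorem stdGaussian_real_le_inner_map_self_le (hT : T.IsSymmetric)
    (htrace : LinearMap.trace ℝ E T = 0) {L s : ℝ} (hL : ∀ x, |⟪T x, x⟫| ≤ L * ‖x‖ ^ 2)
    (hs : 0 < s) (hsL : s ≤ L) :
    (stdGaussian E).real {x | s * ‖x‖ ^ 2 ≤ ⟪T x, x⟫} ≤
      Real.exp (-(Module.finrank ℝ E * s ^ 2 / (16 * L ^ 2))) := by
  have hLpos : 0 < L := hs.trans_le hsL
  set t := s / (8 * L ^ 2)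
  have ht : 0 < t := by positivity
  set S := t • (T - s • 1)
  have hform (x : E) : ⟪S x, x⟫ = t * (⟪T x, x⟫ - s * ‖x‖ ^ 2) := by
    simp [S, inner_sub_left, inner_smul_left]
  have hS : S.IsSymmetric :=
    (hT.sub (LinearMap.IsSymmetric.one.smul (conj_trivial s))).smul (conj_trivial t)
  have hbound (x : E) : |⟪S x, x⟫| ≤ 1 / 4 * ‖x‖ ^ 2 := by
    have habs : |⟪T x, x⟫ - s * ‖x‖ ^ 2| ≤ 2 * L * ‖x‖ ^ 2 := by
      refine (abs_sub _ _).trans ?_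
      rw [abs_of_nonneg (by positivity : 0 ≤ s * ‖x‖ ^ 2)]
      nlinarith [hL x, mul_le_mul_of_nonneg_right hsL (sq_nonneg ‖x‖)]
    calc |⟪S x, x⟫| = t * |⟪T x, x⟫ - s * ‖x‖ ^ 2| := by rw [hform, abs_mul, abs_of_pos ht]
      _ ≤ t * (2 * L * ‖x‖ ^ 2) := by gcongr
      _ = s / L * (1 / 4 * ‖x‖ ^ 2) := by simp only [t]; field_simp; ring
      _ ≤ 1 * (1 / 4 * ‖x‖ ^ 2) := by gcongr; exact (div_le_one hLpos).2 hsL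
      _ = 1 / 4 * ‖x‖ ^ 2 := one_mul _
  have htrace_sq : LinearMap.trace ℝ E (S * S) ≤ t ^ 2 * (2 * Module.finrank ℝ E * L ^ 2) := by
    rw [trace_smul_sub_smul_one_mul_self, htrace]
    gcongr
    nlinarith [trace_mul_self_le hT hL, pow_le_pow_left₀ hs.le hsL 2]
  calc (stdGaussian E).real {x | s * ‖x‖ ^ 2 ≤ ⟪T x, x⟫}
      = (stdGaussian E).real {x | 0 ≤ ⟪S x, x⟫} := by
        simp only [hform, mul_nonneg_iff_of_pos_left ht, sub_nonneg]
    _ ≤ Real.exp (LinearMap.trace ℝ E S + 2 * LinearMap.trace ℝ E (S * S)) :=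
        stdGaussian_real_inner_map_self_nonneg_le hS hbound
    _ ≤ Real.exp (-(t * s * Module.finrank ℝ E) +
          2 * (t ^ 2 * (2 * Module.finrank ℝ E * L ^ 2))) := by
        rw [trace_smul_sub_smul_one, htrace]
        gcongr
        linarith
    _ = Real.exp (-(Module.finrank ℝ E * s ^ 2 / (16 * L ^ 2))) := by
        congr 1
        simp only [t]
        field_simp
        ring

lemma le_stdGaussian_real_inner_map_self_nonneg_of_trace_mul_self_eq (hT : T.IsSymmetric)
    (htrace : LinearMap.trace ℝ E T = 0) (htrace_sq : LinearMap.trace ℝ E (T * T) = 1 / 64) :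
    1 / 2 ^ 17 ≤ (stdGaussian E).real {x | 0 ≤ ⟪T x, x⟫} := by
  have hsqrt : √(1 / 64 : ℝ) = 1 / 8 := by
    rw [show (1 / 64 : ℝ) = (1 / 8) ^ 2 by norm_num, Real.sqrt_sq (by norm_num)]
  have hbound (x : E) : |⟪T x, x⟫| ≤ 1 / 8 * ‖x‖ ^ 2 := by
    simpa only [htrace_sq, hsqrt] using abs_inner_map_self_le_sqrt_trace hT x
  have hbound₁ (x : E) : |⟪T x, x⟫| ≤ 1 / 4 * ‖x‖ ^ 2 :=
    (hbound x).trans (by gcongr; norm_num)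
  have hform₂ (x : E) : ⟪((2 : ℝ) • T) x, x⟫ = 2 * ⟪T x, x⟫ := by simp [inner_smul_left]
  have hbound₂ (x : E) : |⟪((2 : ℝ) • T) x, x⟫| ≤ 1 / 4 * ‖x‖ ^ 2 := by
    rw [hform₂, abs_mul, abs_two]
    linarith [hbound x]
  have hsymm₂ : ((2 : ℝ) • T).IsSymmetric := hT.smul (conj_trivial 2)
  have htrace_sq₂ : LinearMap.trace ℝ E (((2 : ℝ) • T) * ((2 : ℝ) • T)) = 1 / 16 := by
    rw [smul_mul_smul_comm, map_smul, htrace_sq]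
    norm_num
  have hlower : 1 + 1 / 256 ≤ ∫ x, Real.exp ⟪T x, x⟫ ∂(stdGaussian E) := by
    refine le_trans ?_ (le_integral_exp_inner_map_self hT hbound₁)
    rw [htrace, htrace_sq]
    linarith [Real.add_one_le_exp (0 + 1 / 64 / 4 : ℝ)]
  have hupper : ∫ x, Real.exp (2 * ⟪T x, x⟫) ∂(stdGaussian E) ≤ 2 := by
    simp only [← hform₂]
    refine (integral_exp_inner_map_self_le hsymm₂ hbound₂).trans ?_
    rw [map_smul, htrace, htrace_sq₂, ← Real.le_log_iff_exp_le two_pos, smul_zero]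
    linarith [Real.log_two_gt_d9]
  have hint₂ := integrable_exp_inner_map_self_of_abs_le hsymm₂ hbound₂
  simp only [hform₂] at hint₂
  calc (1 : ℝ) / 2 ^ 17 = (1 / 256) ^ 2 / 2 := by norm_num
    _ ≤ (stdGaussian E).real {x | 0 ≤ ⟪T x, x⟫} :=
      sq_div_le_measureReal_nonneg_of_le_integral_exp (measurable_inner_map_self T)
        (integrable_exp_inner_map_self_of_abs_le hT hbound₁) hint₂ (by norm_num) two_pos
        hlower hupper

theorem le_stdGaussian_real_inner_map_self_nonneg (hT : T.IsSymmetric)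
    (htrace : LinearMap.trace ℝ E T = 0) :
    1 / 2 ^ 17 ≤ (stdGaussian E).real {x | 0 ≤ ⟪T x, x⟫} := by
  set V := LinearMap.trace ℝ E (T * T)
  have hV_nonneg : 0 ≤ V := trace_mul_self_nonneg hT
  rcases hV_nonneg.eq_or_lt with hV_zero | hV_pos
  · have hform (x : E) : ⟪T x, x⟫ = 0 := by
      simpa [V, ← hV_zero] using abs_inner_map_self_le_sqrt_trace hT x
    norm_num [hform]
  set t := 1 / (8 * √V)
  have ht : 0 < t := by positivity
  have htrace_smul : LinearMap.trace ℝ E (t • T) = 0 := by rw [map_smul, htrace, smul_zero]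
  have htrace_sq : LinearMap.trace ℝ E ((t • T) * (t • T)) = 1 / 64 := by
    rw [smul_mul_smul_comm, map_smul, smul_eq_mul, ← sq, div_pow, mul_pow, Real.sq_sqrt hV_nonneg]
    change 1 ^ 2 / (8 ^ 2 * V) * V = 1 / 64
    field_simp
    norm_num
  simpa [inner_smul_left, mul_nonneg_iff_of_pos_left ht] using
    le_stdGaussian_real_inner_map_self_nonneg_of_trace_mul_self_eq (hT.smul (conj_trivial t))
      htrace_smul htrace_sq

end SymmetricOperator

section SphereUniform

variable {E : Type*} [NormedAddCommGroup E] [InnerProductSpace ℝ E]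

lemma exists_linearIsometryEquiv_apply_eq {x y : E} (h : ‖x‖ = ‖y‖) :
    ∃ f : E ≃ₗᵢ[ℝ] E, f x = y :=
  ⟨(ℝ ∙ (x - y))ᗮ.reflection, Submodule.reflection_sub h⟩

lemma isSymmetric_neg {T : E →ₗ[ℝ] E} (hT : T.IsSymmetric) : (-T).IsSymmetric :=
  fun x y => by simp [hT x y]

lemma inner_map_self_normalize (T : E →ₗ[ℝ] E) (x : E) :
    ⟪T x, x⟫ = ‖x‖ ^ 2 * ⟪T (NormedSpace.normalize x), NormedSpace.normalize x⟫ := by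
  conv_lhs => rw [← NormedSpace.norm_smul_normalize x]
  simp only [map_smul, inner_smul_left, inner_smul_right, conj_trivial]
  ring

lemma normalize_linearIsometryEquiv (f : E ≃ₗᵢ[ℝ] E) (x : E) :
    NormedSpace.normalize (f x) = f (NormedSpace.normalize x) := by
  simp [NormedSpace.normalize]

variable [MeasurableSpace E] [BorelSpace E]

lemma measurable_normalize : Measurable (NormedSpace.normalize : E → E) :=
  measurable_norm.inv.smul measurable_id

lemma charFun_eq_of_norm_eq_of_map_eq {μ : Measure E} (hμ : ∀ f : E ≃ₗᵢ[ℝ] E, μ.map f = μ)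
    {s t : E} (hst : ‖s‖ = ‖t‖) : charFun μ s = charFun μ t := by
  obtain ⟨f, rfl⟩ := exists_linearIsometryEquiv_apply_eq hst
  conv_rhs => rw [← hμ f]
  rw [charFun_apply, charFun_apply, integral_map f.continuous.aemeasurable
    (Continuous.aestronglyMeasurable (by fun_prop))]
  simp only [LinearIsometryEquiv.inner_map_map]

variable [FiniteDimensional ℝ E]

variable (E) in
/-- The uniform probability measure on the unit sphere of `E`, as a measure on `E`: the law of
the direction of a standard Gaussian vector. It is the Dirac mass at `0` if `E` is trivial. -/
noncomputable def sphereUniform : Measure E :=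
  (stdGaussian E).map NormedSpace.normalize

instance isProbabilityMeasure_sphereUniform : IsProbabilityMeasure (sphereUniform E) :=
  Measure.isProbabilityMeasure_map measurable_normalize.aemeasurable

lemma map_sphereUniform (f : E ≃ₗᵢ[ℝ] E) : (sphereUniform E).map f = sphereUniform E := by
  conv_rhs => rw [sphereUniform, ← stdGaussian_map f]
  rw [sphereUniform, Measure.map_map f.continuous.measurable measurable_normalize,
    Measure.map_map measurable_normalize f.continuous.measurable]
  congr 1
  exact funext fun x => (normalize_linearIsometryEquiv f x).symm

lemma ae_inner_ne_zero_stdGaussian {v : E} (hv : v ≠ 0) : ∀ᵐ x ∂(stdGaussian E), ⟪v, x⟫ ≠ 0 := by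
  have hlaw := IsGaussian.map_eq_gaussianReal (μ := stdGaussian E) (innerSL ℝ v)
  have hvar : Var[innerSL ℝ v; stdGaussian E].toNNReal ≠ 0 := by
    rw [variance_dual_stdGaussian, innerSL_apply_norm]
    simpa using hv
  have := nullSingletonClass_gaussianReal (μ := (stdGaussian E)[innerSL ℝ v]) hvar
  refine ae_of_ae_map (f := innerSL ℝ v) (innerSL ℝ v).continuous.aemeasurable
    (p := fun r => r ≠ 0) ?_
  rw [hlaw]
  exact Measure.ae_ne _ 0

lemma ae_inner_ne_zero_sphereUniform {v : E} (hv : v ≠ 0) :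
    ∀ᵐ x ∂(sphereUniform E), ⟪v, x⟫ ≠ 0 := by
  rw [sphereUniform, ae_map_iff (p := fun x => ⟪v, x⟫ ≠ 0) measurable_normalize.aemeasurable
    (measurableSet_eq_fun (by fun_prop) measurable_const).compl]
  filter_upwards [ae_inner_ne_zero_stdGaussian hv] with x hx hzero
  rw [← NormedSpace.norm_smul_normalize x, inner_smul_right, hzero, mul_zero] at hx
  exact hx rfl

lemma ae_norm_eq_one_sphereUniform [Nontrivial E] : ∀ᵐ x ∂(sphereUniform E), ‖x‖ = 1 := by
  obtain ⟨v, hv⟩ := exists_ne (0 : E)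
  rw [sphereUniform, ae_map_iff measurable_normalize.aemeasurable
    (measurableSet_eq_fun measurable_norm measurable_const)]
  filter_upwards [ae_inner_ne_zero_stdGaussian hv] with x hx
  rw [NormedSpace.norm_normalize_eq_one_iff]
  rintro rfl
  exact hx (inner_zero_right v)

-- Both characteristic functions at `t` are the average of `exp (i ‖t‖ ⟪x, y⟫)` over `μ × ν`.
theorem eq_of_map_eq_of_ae_norm_eq_one {μ ν : Measure E} [IsProbabilityMeasure μ]
    [IsProbabilityMeasure ν] (hμ : ∀ f : E ≃ₗᵢ[ℝ] E, μ.map f = μ)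
    (hν : ∀ f : E ≃ₗᵢ[ℝ] E, ν.map f = ν) (hμ_norm : ∀ᵐ x ∂μ, ‖x‖ = 1)
    (hν_norm : ∀ᵐ x ∂ν, ‖x‖ = 1) : μ = ν := by
  have charFun_eq_integral {μ ν : Measure E} [IsProbabilityMeasure ν]
      (hμ : ∀ f : E ≃ₗᵢ[ℝ] E, μ.map f = μ) (hν_norm : ∀ᵐ x ∂ν, ‖x‖ = 1) (t : E) :
      charFun μ t = ∫ y, ∫ x, Complex.exp (⟪x, ‖t‖ • y⟫ * Complex.I) ∂μ ∂ν := by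
    have hconst : (fun y => charFun μ (‖t‖ • y)) =ᵐ[ν] fun _ => charFun μ t := by
      filter_upwards [hν_norm] with y hy
      exact charFun_eq_of_norm_eq_of_map_eq hμ (by simp [norm_smul, hy])
    simpa [charFun_apply] using (integral_congr_ae hconst).symm
  refine Measure.ext_of_charFun (funext fun t => ?_)
  have hint : Integrable (Function.uncurry fun x y : E =>
      Complex.exp (⟪x, ‖t‖ • y⟫ * Complex.I)) (μ.prod ν) := by
    refine Integrable.of_bound (C := 1) (Continuous.aestronglyMeasurable (by fun_prop)) ?_
    exact ae_of_all _ fun p => (Complex.norm_exp_ofReal_mul_I _).le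
  rw [charFun_eq_integral hμ hν_norm, charFun_eq_integral hν hμ_norm,
    ← integral_integral_swap hint]
  simp only [inner_smul_right, real_inner_comm]

lemma sphereUniform_real_inner_map_self_nonneg (T : E →ₗ[ℝ] E) :
    (sphereUniform E).real {x | 0 ≤ ⟪T x, x⟫} = (stdGaussian E).real {x | 0 ≤ ⟪T x, x⟫} := by
  rw [sphereUniform, map_measureReal_apply measurable_normalize
    (measurableSet_le measurable_const (measurable_inner_map_self T))]
  congr 1
  ext x
  rcases eq_or_ne x 0 with rfl | hx
  · simp
  · simp only [Set.mem_preimage, Set.mem_ofPred_eq, inner_map_self_normalize T x]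
    rw [mul_nonneg_iff_of_pos_left (by positivity)]

lemma le_sphereUniform_real_inner_map_self_nonneg {T : E →ₗ[ℝ] E} (hT : T.IsSymmetric)
    (htrace : LinearMap.trace ℝ E T = 0) :
    1 / 2 ^ 17 ≤ (sphereUniform E).real {x | 0 ≤ ⟪T x, x⟫} := by
  rw [sphereUniform_real_inner_map_self_nonneg]
  exact le_stdGaussian_real_inner_map_self_nonneg hT htrace

lemma sphereUniform_real_le_inner_map_self_le {T : E →ₗ[ℝ] E} (hT : T.IsSymmetric)
    (htrace : LinearMap.trace ℝ E T = 0) {L s : ℝ} (hL : ∀ x, |⟪T x, x⟫| ≤ L * ‖x‖ ^ 2)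
    (hs : 0 < s) :
    (sphereUniform E).real {x | s ≤ ⟪T x, x⟫} ≤
      Real.exp (-(Module.finrank ℝ E * s ^ 2 / (16 * L ^ 2))) := by
  rw [sphereUniform, map_measureReal_apply measurable_normalize
    (measurableSet_le measurable_const (measurable_inner_map_self T))]
  rcases le_or_gt s L with hsL | hLs
  · refine (measureReal_mono fun x hx => ?_).trans
      (stdGaussian_real_le_inner_map_self_le hT htrace hL hs hsL)
    simp only [Set.mem_ofPred_eq, inner_map_self_normalize T x, mul_comm s]
    exact mul_le_mul_of_nonneg_left hx (sq_nonneg _)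
  · have hempty : NormedSpace.normalize ⁻¹' {x | s ≤ ⟪T x, x⟫} = ∅ := by
      refine Set.eq_empty_of_forall_notMem fun x hx => ?_
      have hform := (le_abs_self _).trans (hL (NormedSpace.normalize x))
      have hx' : s ≤ ⟪T (NormedSpace.normalize x), NormedSpace.normalize x⟫ := hx
      rcases eq_or_ne x 0 with rfl | hx₀
      · rw [NormedSpace.normalize_zero_eq_zero, map_zero, inner_zero_left] at hx'
        exact absurd hx' hs.not_ge
      · rw [NormedSpace.norm_normalize_eq_one_iff.2 hx₀] at hform
        linarith
    rw [hempty, measureReal_empty]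
    positivity

theorem sphereUniform_real_le_abs_inner_map_self_le {T : E →ₗ[ℝ] E} (hT : T.IsSymmetric)
    (htrace : LinearMap.trace ℝ E T = 0) {L s : ℝ} (hL : ∀ x, |⟪T x, x⟫| ≤ L * ‖x‖ ^ 2)
    (hs : 0 < s) :
    (sphereUniform E).real {x | s ≤ |⟪T x, x⟫|} ≤
      2 * Real.exp (-(Module.finrank ℝ E * s ^ 2 / (16 * L ^ 2))) := by
  have hneg := sphereUniform_real_le_inner_map_self_le (isSymmetric_neg hT)
    (by simp [htrace]) (L := L) (by simpa using hL) hs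
  simp only [LinearMap.neg_apply, inner_neg_left] at hneg
  calc (sphereUniform E).real {x | s ≤ |⟪T x, x⟫|}
      = (sphereUniform E).real ({x | s ≤ ⟪T x, x⟫} ∪ {x | s ≤ -⟪T x, x⟫}) := by
        simp only [le_abs, Set.ofPred_or]
    _ ≤ _ := measureReal_union_le _ _
    _ ≤ _ := by linarith [sphereUniform_real_le_inner_map_self_le hT htrace hL hs]

end SphereUniform

section GreatCircle

variable {E : Type*} [NormedAddCommGroup E] [InnerProductSpace ℝ E]

/-- The point at angle `θ` from the unit vector `x` on the great circle leaving `x` towards `y`.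
If `y` is a multiple of `x` there is no such circle, and the value is the non-unit `cos θ • x`. -/
noncomputable def greatCircle (x y : E) (θ : ℝ) : E :=
  Real.cos θ • x + Real.sin θ • NormedSpace.normalize (y - ⟪x, y⟫ • x)

lemma greatCircle_linearIsometryEquiv (f : E ≃ₗᵢ[ℝ] E) (x y : E) (θ : ℝ) :
    greatCircle (f x) (f y) θ = f (greatCircle x y θ) := by
  simp only [greatCircle, f.inner_map_map, ← map_smul, ← map_sub, normalize_linearIsometryEquiv,
    ← map_add]

lemma continuous_greatCircle (x y : E) : Continuous (greatCircle x y) := by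
  unfold greatCircle
  fun_prop

lemma norm_greatCircle {x y : E} (hx : ‖x‖ = 1) (hy : y ≠ ⟪x, y⟫ • x) (θ : ℝ) :
    ‖greatCircle x y θ‖ = 1 := by
  have horth : ⟪x, NormedSpace.normalize (y - ⟪x, y⟫ • x)⟫ = 0 := by
    simp [NormedSpace.normalize, inner_smul_right, inner_sub_right, hx]
  have hnorm : ‖NormedSpace.normalize (y - ⟪x, y⟫ • x)‖ = 1 :=
    NormedSpace.norm_normalize_eq_one_iff.2 (sub_ne_zero.2 hy)
  rw [← sq_eq_sq₀ (norm_nonneg _) zero_le_one, greatCircle, norm_add_sq_real, inner_smul_left,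
    inner_smul_right, horth, norm_smul, norm_smul, hx, hnorm]
  simp

lemma exists_greatCircle_eq {x y : E} (hx : ‖x‖ = 1) (hy : ‖y‖ = 1) :
    ∃ θ ∈ Set.Icc 0 Real.pi, greatCircle x y θ = y := by
  have hpythagoras : ‖y - ⟪x, y⟫ • x‖ ^ 2 = 1 - ⟪x, y⟫ ^ 2 := by
    rw [norm_sub_sq_real, inner_smul_right, norm_smul, hx, hy, real_inner_comm, Real.norm_eq_abs,
      mul_one, sq_abs]
    ring
  have hinner : |⟪x, y⟫| ≤ 1 := by simpa [hx, hy] using abs_real_inner_le_norm x y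
  refine ⟨Real.arccos ⟪x, y⟫, ⟨Real.arccos_nonneg _, Real.arccos_le_pi _⟩, ?_⟩
  rw [greatCircle, Real.cos_arccos (abs_le.1 hinner).1 (abs_le.1 hinner).2, Real.sin_arccos,
    ← hpythagoras, Real.sqrt_sq (norm_nonneg _), NormedSpace.norm_smul_normalize]
  abel

lemma inner_map_self_greatCircle {T : E →ₗ[ℝ] E} (hT : T.IsSymmetric) (x y : E) (θ : ℝ) :
    ⟪T (greatCircle x y θ), greatCircle x y θ⟫ =
      (⟪T x, x⟫ + ⟪T (greatCircle x y (Real.pi / 2)), greatCircle x y (Real.pi / 2)⟫) / 2 +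
      (⟪T x, x⟫ - ⟪T (greatCircle x y (Real.pi / 2)), greatCircle x y (Real.pi / 2)⟫) / 2 *
        Real.cos (2 * θ) +
      ⟪T x, greatCircle x y (Real.pi / 2)⟫ * Real.sin (2 * θ) := by
  have hpi_div_two :
      greatCircle x y (Real.pi / 2) = NormedSpace.normalize (y - ⟪x, y⟫ • x) := by
    simp [greatCircle]
  rw [hpi_div_two, greatCircle, Real.cos_two_mul, Real.sin_two_mul]
  set w := NormedSpace.normalize (y - ⟪x, y⟫ • x)
  have hcross : ⟪T w, x⟫ = ⟪T x, w⟫ := by rw [hT, real_inner_comm]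
  simp only [map_add, map_smul, inner_add_left, inner_add_right, inner_smul_left,
    inner_smul_right, conj_trivial, hcross]
  linear_combination ⟪T w, w⟫ * Real.sin_sq_add_cos_sq θ

-- `a + b cos 2θ + c sin 2θ` is determined by its values at `θ = 0, π / 4, π / 2`.
lemma abs_inner_map_self_greatCircle_sub_le {T : E →ₗ[ℝ] E} (hT : T.IsSymmetric) {x y : E}
    {M : ℝ} (hM : ∀ θ ∈ ({0, Real.pi / 4, Real.pi / 2} : Finset ℝ),
      |⟪T (greatCircle x y θ), greatCircle x y θ⟫| ≤ M) (θ φ : ℝ) :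
    |⟪T (greatCircle x y θ), greatCircle x y θ⟫ - ⟪T (greatCircle x y φ), greatCircle x y φ⟫| ≤
      6 * M * |θ - φ| := by
  simp only [Finset.mem_insert, Finset.mem_singleton, forall_eq_or_imp, forall_eq] at hM
  obtain ⟨hzero, hquarter, hhalf⟩ := hM
  rw [inner_map_self_greatCircle hT x y (Real.pi / 4), show 2 * (Real.pi / 4) = Real.pi / 2 by ring,
    Real.cos_pi_div_two, Real.sin_pi_div_two] at hquarter
  rw [inner_map_self_greatCircle hT x y θ, inner_map_self_greatCircle hT x y φ]
  rw [show greatCircle x y 0 = x by simp [greatCircle]] at hzero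
  set A := ⟪T x, x⟫
  set B := ⟪T (greatCircle x y (Real.pi / 2)), greatCircle x y (Real.pi / 2)⟫
  set D := ⟪T x, greatCircle x y (Real.pi / 2)⟫
  have hcos : |(A - B) / 2| ≤ M := by
    rw [abs_le] at *
    constructor <;> linarith
  have hsin : |D| ≤ 2 * M := by
    rw [abs_le] at *
    constructor <;> linarith
  have hdouble : |2 * θ - 2 * φ| = 2 * |θ - φ| := by rw [← mul_sub, abs_mul, abs_two]
  calc |(A + B) / 2 + (A - B) / 2 * Real.cos (2 * θ) + D * Real.sin (2 * θ) -
        ((A + B) / 2 + (A - B) / 2 * Real.cos (2 * φ) + D * Real.sin (2 * φ))|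
      = |(A - B) / 2 * (Real.cos (2 * θ) - Real.cos (2 * φ)) +
          D * (Real.sin (2 * θ) - Real.sin (2 * φ))| := by ring_nf
    _ ≤ |(A - B) / 2| * |Real.cos (2 * θ) - Real.cos (2 * φ)| +
          |D| * |Real.sin (2 * θ) - Real.sin (2 * φ)| := by
        rw [← abs_mul, ← abs_mul]
        exact abs_add_le _ _
    _ ≤ M * |2 * θ - 2 * φ| + 2 * M * |2 * θ - 2 * φ| := by
        have hM_nonneg : 0 ≤ M := (abs_nonneg _).trans hcos
        exact add_le_add
          (mul_le_mul hcos (Real.abs_cos_sub_cos_le _ _) (abs_nonneg _) hM_nonneg)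
          (mul_le_mul hsin (Real.abs_sin_sub_sin_le _ _) (abs_nonneg _) (by positivity))
    _ = 6 * M * |θ - φ| := by rw [hdouble]; ring

lemma exists_nat_abs_sub_mul_div_le {N : ℕ} (hN : 0 < N) {a θ : ℝ} (hθ : θ ∈ Set.Icc 0 a) :
    ∃ k ∈ Finset.range (N + 1), |k * a / N - θ| ≤ a / N := by
  have ha : 0 ≤ a := hθ.1.trans hθ.2
  have hNpos : (0 : ℝ) < N := by exact_mod_cast hN
  rcases ha.eq_or_lt with rfl | ha_pos
  · exact ⟨0, by simp, by simp [le_antisymm hθ.2 hθ.1]⟩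
  set r := θ * N / a
  have hr : 0 ≤ r := div_nonneg (mul_nonneg hθ.1 hNpos.le) ha
  have hθr : θ = r * a / N := by simp only [r]; field_simp
  have hrN : r ≤ N := (div_le_iff₀ ha_pos).2 (by nlinarith [hθ.2])
  refine ⟨⌊r⌋₊, Finset.mem_range.2 (Nat.lt_succ_of_le (Nat.floor_le_of_le hrN)), ?_⟩
  rw [hθr, ← sub_div, ← sub_mul, abs_div, abs_mul, abs_of_pos ha_pos, abs_of_pos hNpos]
  gcongr
  refine mul_le_of_le_one_left ha (abs_le.2 ⟨?_, ?_⟩) <;>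
    linarith [Nat.floor_le hr, Nat.lt_floor_add_one r]

lemma exists_abs_inner_map_self_greatCircle_le [FiniteDimensional ℝ E] {T : E →ₗ[ℝ] E}
    (hT : T.IsSymmetric) {x y : E} (hx : ‖x‖ = 1) (hy : ‖y‖ = 1) (hTx : 0 ≤ ⟪T x, x⟫)
    (hTy : ⟪T y, y⟫ ≤ 0) {M : ℝ}
    (hM : ∀ θ ∈ ({0, Real.pi / 4, Real.pi / 2} : Finset ℝ),
      |⟪T (greatCircle x y θ), greatCircle x y θ⟫| ≤ M)
    {N : ℕ} (hN : 0 < N) :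
    ∃ k ∈ Finset.range (N + 1),
      |⟪T (greatCircle x y (k * Real.pi / N)), greatCircle x y (k * Real.pi / N)⟫| ≤
        20 * M / N := by
  set q : ℝ → ℝ := fun θ => ⟪T (greatCircle x y θ), greatCircle x y θ⟫
  obtain ⟨ψ, hψ, hψy⟩ := exists_greatCircle_eq hx hy
  have hq_zero : 0 ≤ q 0 := by simpa [q, greatCircle] using hTx
  have hq_psi : q ψ ≤ 0 := by simpa [q, hψy] using hTy
  have hq_cont : Continuous q :=
    (continuous_inner_map_self T).comp (continuous_greatCircle x y)
  obtain ⟨θ₀, hθ₀, hroot⟩ :=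
    intermediate_value_Icc' hψ.1 hq_cont.continuousOn ⟨hq_psi, hq_zero⟩
  obtain ⟨k, hk, hkθ⟩ := exists_nat_abs_sub_mul_div_le hN ⟨hθ₀.1, hθ₀.2.trans hψ.2⟩
  have hM_nonneg : 0 ≤ M := (abs_nonneg _).trans (hM 0 (by simp))
  have hlip := abs_inner_map_self_greatCircle_sub_le hT hM (k * Real.pi / N) θ₀
  refine ⟨k, hk, ?_⟩
  calc |q (k * Real.pi / N)| = |q (k * Real.pi / N) - q θ₀| := by rw [hroot, sub_zero]
    _ ≤ 6 * M * |k * Real.pi / N - θ₀| := hlip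
    _ ≤ 6 * M * (Real.pi / N) := by gcongr
    _ = (6 * Real.pi) * M / N := by ring
    _ ≤ 20 * M / N := by gcongr; linarith [Real.pi_lt_d2]

lemma exists_ne_zero_inner_eq_zero [FiniteDimensional ℝ E]
    (hE : 1 < Module.finrank ℝ E) (x : E) :
    ∃ v : E, v ≠ 0 ∧ ⟪v, x⟫ = 0 := by
  have hne : (ℝ ∙ x)ᗮ ≠ ⊥ := fun h => by
    have hspan : Module.finrank ℝ (ℝ ∙ x) ≤ 1 := by
      simpa using finrank_span_le_card (R := ℝ) ({x} : Set E)
    rw [Submodule.orthogonal_eq_bot_iff.1 h, finrank_top] at hspan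
    omega
  obtain ⟨v, hv, hv₀⟩ := Submodule.exists_mem_ne_zero_of_ne_bot hne
  exact ⟨v, hv₀, Submodule.mem_orthogonal_singleton_iff_inner_left.1 hv⟩

variable [MeasurableSpace E] [BorelSpace E] [FiniteDimensional ℝ E]

lemma measurable_greatCircle (θ : ℝ) : Measurable fun p : E × E => greatCircle p.1 p.2 θ := by
  have := measurable_normalize (E := E)
  unfold greatCircle
  fun_prop

lemma ae_norm_greatCircle_eq_one (hE : 1 < Module.finrank ℝ E) (θ : ℝ) :
    ∀ᵐ p ∂(sphereUniform E).prod (sphereUniform E), ‖greatCircle p.1 p.2 θ‖ = 1 := by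
  have : Nontrivial E := Module.nontrivial_of_finrank_pos (zero_lt_one.trans hE)
  rw [Measure.ae_prod_iff_ae_ae
    (measurableSet_eq_fun (measurable_greatCircle θ).norm measurable_const)]
  filter_upwards [ae_norm_eq_one_sphereUniform] with x hx
  obtain ⟨v, hv, hvx⟩ := exists_ne_zero_inner_eq_zero hE x
  filter_upwards [ae_inner_ne_zero_sphereUniform hv] with y hy
  refine norm_greatCircle hx (fun hyx => hy ?_) θ
  rw [hyx, inner_smul_right, hvx, mul_zero]

theorem map_greatCircle_sphereUniform (hE : 1 < Module.finrank ℝ E) (θ : ℝ) :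
    ((sphereUniform E).prod (sphereUniform E)).map (fun p => greatCircle p.1 p.2 θ) =
      sphereUniform E := by
  have : Nontrivial E := Module.nontrivial_of_finrank_pos (zero_lt_one.trans hE)
  have hmeas := measurable_greatCircle (E := E) θ
  have := Measure.isProbabilityMeasure_map
    (μ := (sphereUniform E).prod (sphereUniform E)) hmeas.aemeasurable
  refine eq_of_map_eq_of_ae_norm_eq_one (fun f => ?_) map_sphereUniform ?_
    ae_norm_eq_one_sphereUniform
  · have hf : Measurable f := f.continuous.measurable
    conv_rhs => rw [← map_sphereUniform f, Measure.map_prod_map _ _ hf hf]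
    rw [Measure.map_map hf hmeas, Measure.map_map hmeas (hf.prodMap hf)]
    congr 1
    exact funext fun p => (greatCircle_linearIsometryEquiv f p.1 p.2 θ).symm
  · rw [ae_map_iff hmeas.aemeasurable (measurableSet_eq_fun measurable_norm measurable_const)]
    exact ae_norm_greatCircle_eq_one hE θ

end GreatCircle

section SphereConcentration

variable {E : Type*} [NormedAddCommGroup E] [InnerProductSpace ℝ E] [FiniteDimensional ℝ E]
  [MeasurableSpace E] [BorelSpace E] {T : E →ₗ[ℝ] E}

lemma le_sphereUniform_prod_real_nonneg_inter_nonpos (hT : T.IsSymmetric)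
    (htrace : LinearMap.trace ℝ E T = 0) :
    1 / 2 ^ 34 ≤ ((sphereUniform E).prod (sphereUniform E)).real
      ({x | 0 ≤ ⟪T x, x⟫} ×ˢ {y | ⟪T y, y⟫ ≤ 0}) := by
  have hpos := le_sphereUniform_real_inner_map_self_nonneg hT htrace
  have hneg := le_sphereUniform_real_inner_map_self_nonneg (isSymmetric_neg hT) (by simp [htrace])
  simp only [LinearMap.neg_apply, inner_neg_left, Left.nonneg_neg_iff] at hneg
  rw [measureReal_prod_prod]
  calc (1 : ℝ) / 2 ^ 34 = 1 / 2 ^ 17 * (1 / 2 ^ 17) := by norm_num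
    _ ≤ _ := mul_le_mul hpos hneg (by norm_num) measureReal_nonneg

lemma sphereUniform_prod_real_greatCircle_mem (hE : 1 < Module.finrank ℝ E) (θ : ℝ) {s : Set E}
    (hs : MeasurableSet s) :
    ((sphereUniform E).prod (sphereUniform E)).real {p | greatCircle p.1 p.2 θ ∈ s} =
      (sphereUniform E).real s := by
  conv_rhs => rw [← map_greatCircle_sphereUniform hE θ,
    map_measureReal_apply (measurable_greatCircle θ) hs]
  rfl

theorem le_sphereUniform_real_le_abs_add_abs_le (hT : T.IsSymmetric)
    (htrace : LinearMap.trace ℝ E T = 0) (hE : 1 < Module.finrank ℝ E) (M : ℝ) {N : ℕ}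
    (hN : 0 < N) :
    1 / 2 ^ 34 ≤ 3 * (sphereUniform E).real {x | M ≤ |⟪T x, x⟫|} +
      (N + 1) * (sphereUniform E).real {x | |⟪T x, x⟫| ≤ 20 * M / N} := by
  have : Nontrivial E := Module.nontrivial_of_finrank_pos (zero_lt_one.trans hE)
  have hq := (measurable_inner_map_self T).abs
  set σ := sphereUniform E
  set large : Set E := {x | M ≤ |⟪T x, x⟫|}
  set small : Set E := {x | |⟪T x, x⟫| ≤ 20 * M / N}
  have hlarge : MeasurableSet large := measurableSet_le measurable_const hq
  have hsmall : MeasurableSet small := measurableSet_le hq measurable_const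
  set quarters : Finset ℝ := {0, Real.pi / 4, Real.pi / 2}
  have hcover : ∀ᵐ p ∂σ.prod σ, p ∈ {x | 0 ≤ ⟪T x, x⟫} ×ˢ {y | ⟪T y, y⟫ ≤ 0} →
      p ∈ (⋃ θ ∈ quarters, {p | greatCircle p.1 p.2 θ ∈ large}) ∪
        ⋃ k ∈ Finset.range (N + 1), {p | greatCircle p.1 p.2 (k * Real.pi / N) ∈ small} := by
    filter_upwards [Measure.quasiMeasurePreserving_fst.ae ae_norm_eq_one_sphereUniform,
      Measure.quasiMeasurePreserving_snd.ae ae_norm_eq_one_sphereUniform] with p hx hy hp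
    simp only [Set.mem_union, Set.mem_iUnion, Set.mem_ofPred_eq, exists_prop, large, small]
    refine or_iff_not_imp_left.2 fun hnot => ?_
    push Not at hnot
    exact exists_abs_inner_map_self_greatCircle_le hT hx hy hp.1 hp.2
      (fun θ hθ => (hnot θ hθ).le) hN
  calc (1 : ℝ) / 2 ^ 34
      ≤ (σ.prod σ).real ({x | 0 ≤ ⟪T x, x⟫} ×ˢ {y | ⟪T y, y⟫ ≤ 0}) :=
        le_sphereUniform_prod_real_nonneg_inter_nonpos hT htrace
    _ ≤ _ := ENNReal.toReal_mono (measure_ne_top _ _) (measure_mono_ae hcover)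
    _ ≤ _ := measureReal_union_le _ _
    _ ≤ ∑ θ ∈ quarters, (σ.prod σ).real {p | greatCircle p.1 p.2 θ ∈ large} +
          ∑ k ∈ Finset.range (N + 1),
            (σ.prod σ).real {p | greatCircle p.1 p.2 (k * Real.pi / N) ∈ small} :=
        add_le_add (measureReal_biUnion_finset_le _ _) (measureReal_biUnion_finset_le _ _)
    _ = quarters.card * σ.real large + (N + 1) * σ.real small := by
        rw [Finset.sum_congr rfl fun θ _ => sphereUniform_prod_real_greatCircle_mem hE θ hlarge,
          Finset.sum_congr rfl fun _ _ => sphereUniform_prod_real_greatCircle_mem hE _ hsmall,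
          Finset.sum_const, Finset.sum_const, Finset.card_range, nsmul_eq_mul, nsmul_eq_mul,
          Nat.cast_add, Nat.cast_one]
    _ ≤ 3 * σ.real large + (N + 1) * σ.real small := by
        gcongr
        exact_mod_cast Finset.card_le_three

lemma sphereUniform_real_div_sqrt_le_abs_inner_map_self_le (hT : T.IsSymmetric)
    (htrace : LinearMap.trace ℝ E T = 0) (hE : 1 < Module.finrank ℝ E) {L : ℝ}
    (hL : ∀ x, |⟪T x, x⟫| ≤ L * ‖x‖ ^ 2) (hL_pos : 0 < L) :
    (sphereUniform E).real {x | 24 * L / √(Module.finrank ℝ E) ≤ |⟪T x, x⟫|} ≤ 1 / 2 ^ 50 := by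
  have hn : (0 : ℝ) < Module.finrank ℝ E := by exact_mod_cast zero_lt_one.trans hE
  have hexponent : Module.finrank ℝ E * (24 * L / √(Module.finrank ℝ E)) ^ 2 / (16 * L ^ 2) =
      36 := by
    rw [div_pow, Real.sq_sqrt hn.le]
    field_simp
    norm_num
  have hexp : Real.exp (-36) ≤ 1 / 2 ^ 51 := by
    rw [Real.exp_neg, one_div, show (36 : ℝ) = (36 : ℕ) * 1 by norm_num, Real.exp_nat_mul]
    gcongr
    calc (2 : ℝ) ^ 51 ≤ 2.7 ^ 36 := by norm_num
      _ ≤ Real.exp 1 ^ 36 := by gcongr; linarith [Real.exp_one_gt_d9]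
  have htail := sphereUniform_real_le_abs_inner_map_self_le hT htrace hL
    (s := 24 * L / √(Module.finrank ℝ E)) (by positivity)
  rw [hexponent] at htail
  linarith

theorem le_sphereUniform_real_abs_inner_map_self_le (hT : T.IsSymmetric)
    (htrace : LinearMap.trace ℝ E T = 0) (hE : 1 < Module.finrank ℝ E) {L s : ℝ}
    (hL : ∀ x, |⟪T x, x⟫| ≤ L * ‖x‖ ^ 2) (hL_pos : 0 < L) (hs : 0 < s)
    (hsL : s * √(Module.finrank ℝ E) ≤ 8 * L) :
    1 / 2 ^ 44 * (s * √(Module.finrank ℝ E) / L) ≤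
      (sphereUniform E).real {x | |⟪T x, x⟫| ≤ s} := by
  set r := √(Module.finrank ℝ E : ℝ)
  have hr : 0 < r := Real.sqrt_pos.2 (by exact_mod_cast zero_lt_one.trans hE)
  set M := 24 * L / r
  set N := ⌈480 * L / (s * r)⌉₊
  have hN : 0 < N := Nat.ceil_pos.2 (by positivity)
  have hcount : (N : ℝ) + 1 ≤ 496 * L / (s * r) := by
    have hceil := Nat.ceil_lt_add_one (a := 480 * L / (s * r)) (by positivity)
    have hone : 1 ≤ 8 * L / (s * r) := (one_le_div (by positivity)).2 hsL
    calc (N : ℝ) + 1 ≤ 480 * L / (s * r) + 2 * (8 * L / (s * r)) := by linarith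
      _ = 496 * L / (s * r) := by ring
  have hmesh : 20 * M / N ≤ s := by
    rw [div_le_iff₀ (by exact_mod_cast hN)]
    calc 20 * M = s * (480 * L / (s * r)) := by simp only [M]; field_simp; norm_num
      _ ≤ s * N := by gcongr; exact Nat.le_ceil _
  have htail : (sphereUniform E).real {x | M ≤ |⟪T x, x⟫|} ≤ 1 / 2 ^ 50 :=
    sphereUniform_real_div_sqrt_le_abs_inner_map_self_le hT htrace hE hL hL_pos
  set p := (sphereUniform E).real {x | |⟪T x, x⟫| ≤ s}
  have hunion : 1 / 2 ^ 34 ≤ 3 * (1 / 2 ^ 50) + 496 * L / (s * r) * p :=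
    (le_sphereUniform_real_le_abs_add_abs_le hT htrace hE M hN).trans <|
      add_le_add (by gcongr) <| mul_le_mul hcount
        (measureReal_mono fun x hx => le_trans hx hmesh) measureReal_nonneg (by positivity)
  calc 1 / 2 ^ 44 * (s * r / L) ≤ (1 / 2 ^ 34 - 3 * (1 / 2 ^ 50)) / 496 * (s * r / L) := by
        refine mul_le_mul_of_nonneg_right ?_ (by positivity)
        norm_num
    _ ≤ (496 * L / (s * r) * p) / 496 * (s * r / L) := by
        gcongr
        linarith
    _ = p := by field_simp

lemma one_sub_exp_neg_le_of_small_ball_of_tail {u p : ℝ} (hu : 0 < u)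
    (hsmall : u ≤ 8 → 1 / 2 ^ 44 * u ≤ p) (htail : 1 - 2 * Real.exp (-(u ^ 2 / 16)) ≤ p) :
    1 - Real.exp (-(1 / 2 ^ 47 * u ^ 2)) ≤ p := by
  rcases le_or_gt u 8 with hu8 | hu8
  · calc 1 - Real.exp (-(1 / 2 ^ 47 * u ^ 2)) ≤ 1 / 2 ^ 47 * u ^ 2 := by
          linarith [Real.one_sub_le_exp_neg (1 / 2 ^ 47 * u ^ 2)]
      _ ≤ 1 / 2 ^ 44 * u := by nlinarith
      _ ≤ p := hsmall hu8
  · have hexp_two : 2 ≤ Real.exp (u ^ 2 / 32) := by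
      nlinarith [Real.add_one_le_exp (u ^ 2 / 32)]
    have hsplit : 2 * Real.exp (-(u ^ 2 / 16)) ≤ Real.exp (-(u ^ 2 / 32)) := by
      calc 2 * Real.exp (-(u ^ 2 / 16)) ≤ Real.exp (u ^ 2 / 32) * Real.exp (-(u ^ 2 / 16)) := by
            gcongr
        _ = Real.exp (-(u ^ 2 / 32)) := by rw [← Real.exp_add]; ring_nf
    have hmono : Real.exp (-(u ^ 2 / 32)) ≤ Real.exp (-(1 / 2 ^ 47 * u ^ 2)) := by
      rw [Real.exp_le_exp]
      nlinarith [sq_nonneg u]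
    linarith

theorem one_sub_exp_le_sphereUniform_real_abs_inner_map_self_le (hT : T.IsSymmetric)
    (htrace : LinearMap.trace ℝ E T = 0) (hE : 1 < Module.finrank ℝ E) {L s : ℝ}
    (hL : ∀ x, |⟪T x, x⟫| ≤ L * ‖x‖ ^ 2) (hL_pos : 0 < L) (hs : 0 < s) :
    1 - Real.exp (-(1 / 2 ^ 47 * (Module.finrank ℝ E * s ^ 2 / L ^ 2))) ≤
      (sphereUniform E).real {x | |⟪T x, x⟫| ≤ s} := by
  have hn : (0 : ℝ) < Module.finrank ℝ E := by exact_mod_cast zero_lt_one.trans hE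
  have hsq : Module.finrank ℝ E * s ^ 2 / L ^ 2 = (s * √(Module.finrank ℝ E) / L) ^ 2 := by
    rw [div_pow, mul_pow, Real.sq_sqrt hn.le, mul_comm]
  have htail := sphereUniform_real_le_abs_inner_map_self_le hT htrace hL hs
  rw [show Module.finrank ℝ E * s ^ 2 / (16 * L ^ 2) = Module.finrank ℝ E * s ^ 2 / L ^ 2 / 16 by
    rw [mul_comm 16, ← div_div], hsq] at htail
  rw [hsq]
  refine one_sub_exp_neg_le_of_small_ball_of_tail (by positivity) (fun hu => ?_) ?_
  · exact le_sphereUniform_real_abs_inner_map_self_le hT htrace hE hL hL_pos hs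
      ((div_le_iff₀ hL_pos).1 hu)
  · have hmeas : MeasurableSet {x : E | |⟪T x, x⟫| ≤ s} :=
      measurableSet_le (measurable_inner_map_self T).abs measurable_const
    have hcompl : {x : E | |⟪T x, x⟫| ≤ s}ᶜ ⊆ {x | s ≤ |⟪T x, x⟫|} := fun x
      (hx : ¬|⟪T x, x⟫| ≤ s) => (not_le.1 hx).le
    have hadd := probReal_compl_eq_one_sub (μ := sphereUniform E) hmeas
    linarith [measureReal_mono (μ := sphereUniform E) hcompl]

end SphereConcentration

section OrbitLaw

variable {E Ω : Type*} [NormedAddCommGroup E] [InnerProductSpace ℝ E]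
  [MeasurableSpace E] [BorelSpace E] [MeasurableSpace Ω]

-- The law of `R x` does not depend on `x`, so it may be averaged over `x ∼ ν`; exchanging the
-- order of integration, each `R ω` then preserves `ν`.
theorem map_linearIsometryEquiv_apply_eq {P : Measure Ω} [IsProbabilityMeasure P]
    {ν : Measure E} [IsProbabilityMeasure ν] (hν : ∀ f : E ≃ₗᵢ[ℝ] E, ν.map f = ν)
    (hν_norm : ∀ᵐ u ∂ν, ‖u‖ = 1) {R : Ω → E ≃ₗᵢ[ℝ] E}
    (hR : Measurable fun p : Ω × E => R p.1 p.2)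
    (hlaw : ∀ u v, ‖u‖ = 1 → ‖v‖ = 1 → P.map (R · u) = P.map (R · v)) {x : E} (hx : ‖x‖ = 1) :
    P.map (R · x) = ν := by
  have hR_apply (u : E) : Measurable (R · u) := hR.comp measurable_prodMk_right
  ext s hs
  have hpreimage : MeasurableSet ((fun p : Ω × E => R p.1 p.2) ⁻¹' s) := hR hs
  calc P.map (R · x) s = ∫⁻ u, P.map (R · u) s ∂ν := by
        rw [lintegral_congr_ae (hν_norm.mono fun u hu => by rw [hlaw u x hu hx]), lintegral_const,
          measure_univ, mul_one]
    _ = ∫⁻ u, P ((R · u) ⁻¹' s) ∂ν :=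
        lintegral_congr fun u => Measure.map_apply (hR_apply u) hs
    _ = ∫⁻ ω, ν (R ω ⁻¹' s) ∂P :=
        (Measure.prod_apply_symm hpreimage).symm.trans (Measure.prod_apply hpreimage)
    _ = ∫⁻ _, ν s ∂P := lintegral_congr fun ω => by
        rw [← Measure.map_apply (R ω).continuous.measurable hs, hν]
    _ = ν s := by rw [lintegral_const, measure_univ, mul_one]

theorem map_monoidHom_inv_apply_eq {G F : Type*} [Group G] [MeasurableSpace G] [MeasurableMul G]
    [FunLike F G (E ≃ₗᵢ[ℝ] E)] [MonoidHomClass F G (E ≃ₗᵢ[ℝ] E)]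
    {μ : Measure G} [μ.IsMulLeftInvariant] [IsProbabilityMeasure μ] {ν : Measure E}
    [IsProbabilityMeasure ν] (hν : ∀ f : E ≃ₗᵢ[ℝ] E, ν.map f = ν) (hν_norm : ∀ᵐ u ∂ν, ‖u‖ = 1)
    (φ : F) (hφ : Measurable fun p : G × E => φ p.1⁻¹ p.2)
    (htransitive : ∀ u v : E, ‖u‖ = 1 → ‖v‖ = 1 → ∃ g, φ g u = v) {x : E} (hx : ‖x‖ = 1) :
    μ.map (fun g => φ g⁻¹ x) = ν := by
  refine map_linearIsometryEquiv_apply_eq hν hν_norm hφ (fun u v hu hv => ?_) hx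
  obtain ⟨h, rfl⟩ := htransitive u v hu hv
  have hmeas : Measurable fun g : G => φ g⁻¹ u := hφ.comp measurable_prodMk_right
  have hshift : (fun g => φ g⁻¹ (φ h u)) = (fun g => φ g⁻¹ u) ∘ (h⁻¹ * ·) := by
    funext g
    simp only [Function.comp_apply, _root_.mul_inv_rev, inv_inv, map_mul,
      LinearIsometryEquiv.coe_mul]
  rw [hshift, ← Measure.map_map hmeas (measurable_const_mul _), map_mul_left_eq_self]

end OrbitLaw

section OrthogonalGroup

variable {m : Type*} [Fintype m] [DecidableEq m]

/-- The identification of orthogonal matrices with linear isometries of Euclidean space. -/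
noncomputable def orthogonalGroupEquiv :
    orthogonalGroup m ℝ ≃* (EuclideanSpace ℝ m ≃ₗᵢ[ℝ] EuclideanSpace ℝ m) :=
  (Unitary.mapEquiv { toEuclideanCLM (n := m) (𝕜 := ℝ) with }).toMulEquiv.trans
    Unitary.linearIsometryEquiv

lemma orthogonalGroupEquiv_apply (U : orthogonalGroup m ℝ)
    (x : EuclideanSpace ℝ m) :
    orthogonalGroupEquiv U x = WithLp.toLp 2 (U.1 *ᵥ x.ofLp) := rfl

lemma measurable_orthogonalGroupEquiv_inv_apply [MeasurableSpace (orthogonalGroup m ℝ)]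
    [BorelSpace (orthogonalGroup m ℝ)] :
    Measurable fun p : orthogonalGroup m ℝ × EuclideanSpace ℝ m =>
      orthogonalGroupEquiv p.1⁻¹ p.2 := by
  refine Continuous.measurable ?_
  simp only [orthogonalGroupEquiv_apply]
  fun_prop

theorem map_orthogonalGroupEquiv_inv_apply [Nonempty m] [MeasurableSpace (orthogonalGroup m ℝ)]
    [BorelSpace (orthogonalGroup m ℝ)] (μ : Measure (orthogonalGroup m ℝ)) [μ.IsMulLeftInvariant]
    [IsProbabilityMeasure μ] {x : EuclideanSpace ℝ m} (hx : ‖x‖ = 1) :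
    μ.map (fun U => orthogonalGroupEquiv U⁻¹ x) =
      sphereUniform (EuclideanSpace ℝ m) := by
  refine map_monoidHom_inv_apply_eq map_sphereUniform ae_norm_eq_one_sphereUniform
    orthogonalGroupEquiv measurable_orthogonalGroupEquiv_inv_apply (fun u v hu hv => ?_) hx
  obtain ⟨f, hf⟩ := exists_linearIsometryEquiv_apply_eq (hu.trans hv.symm)
  exact ⟨orthogonalGroupEquiv.symm f, by simp [hf]⟩

end OrthogonalGroup

section Toeplitz

/-- The spectral density `S(ν) = ∑ₖ C(k) e^{-2πikν}` of a real even autocovariance `C`, written with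
cosines so as to be real. -/
noncomputable def spectralDensity (C : ℤ → ℝ) (ν : ℝ) : ℝ :=
  ∑' k : ℤ, C k * Real.cos (2 * Real.pi * k * ν)

/-- The squared modulus `|x̂(ν)|²` of the Fourier transform `x̂(ν) = ∑ⱼ xⱼ e^{-2πijν}` of a finite
signal, split into real and imaginary parts and without the customary factor `1 / m`. -/
noncomputable def periodogram {m : ℕ} (x : Fin m → ℝ) (ν : ℝ) : ℝ :=
  (∑ j, x j * Real.cos (2 * Real.pi * (j : ℕ) * ν)) ^ 2 +
    (∑ j, x j * Real.sin (2 * Real.pi * (j : ℕ) * ν)) ^ 2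

/-- The covariance matrix of `m` consecutive samples of a stationary process with autocovariance
`C`. -/
abbrev toeplitzMatrix (C : ℤ → ℝ) (m : ℕ) : Matrix (Fin m) (Fin m) ℝ :=
  Matrix.of fun j k => C ((j : ℤ) - (k : ℤ))

variable {C : ℤ → ℝ} {m : ℕ}

lemma norm_mul_cos_le (a θ : ℝ) : ‖a * Real.cos θ‖ ≤ |a| := by
  rw [norm_mul, Real.norm_eq_abs, Real.norm_eq_abs]
  exact mul_le_of_le_one_right (abs_nonneg _) (Real.abs_cos_le_one _)

lemma summable_mul_cos (hC : Summable fun k => |C k|) (ν : ℝ) :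
    Summable fun k : ℤ => C k * Real.cos (2 * Real.pi * k * ν) :=
  Summable.of_norm_bounded hC fun _ => norm_mul_cos_le _ _

lemma continuous_spectralDensity (hC : Summable fun k => |C k|) :
    Continuous (spectralDensity C) :=
  continuous_tsum (fun _ => by fun_prop) hC fun _ _ => norm_mul_cos_le _ _

lemma spectralDensity_single (ν : ℝ) : spectralDensity (Pi.single 0 1) ν = 1 := by
  rw [spectralDensity, tsum_eq_single 0 fun k hk => by rw [Pi.single_eq_of_ne hk, zero_mul]]
  simp

lemma continuous_periodogram (x : Fin m → ℝ) : Continuous (periodogram x) := by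
  unfold periodogram
  fun_prop

lemma periodogram_nonneg (x : Fin m → ℝ) (ν : ℝ) : 0 ≤ periodogram x ν := by
  unfold periodogram
  positivity

lemma periodogram_eq_sum_sum (x : Fin m → ℝ) (ν : ℝ) :
    periodogram x ν =
      ∑ j, ∑ k, x j * x k * Real.cos (2 * Real.pi * ((j : ℤ) - (k : ℤ) : ℤ) * ν) := by
  rw [periodogram, sq, sq, Finset.sum_mul_sum, Finset.sum_mul_sum, ← Finset.sum_add_distrib]
  refine Finset.sum_congr rfl fun j _ => ?_
  rw [← Finset.sum_add_distrib]
  refine Finset.sum_congr rfl fun k _ => ?_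
  push_cast
  rw [mul_sub, sub_mul, Real.cos_sub]
  ring

lemma integral_cos_two_pi_int_mul (n : ℤ) :
    ∫ ν in (-(1 : ℝ) / 2)..(1 / 2), Real.cos (2 * Real.pi * n * ν) = if n = 0 then 1 else 0 := by
  split_ifs with h
  · subst h
    norm_num
  · have hn : 2 * Real.pi * (n : ℝ) ≠ 0 := by
      have : (n : ℝ) ≠ 0 := by exact_mod_cast h
      positivity
    rw [intervalIntegral.integral_comp_mul_left (fun x => Real.cos x) hn, integral_cos,
      show 2 * Real.pi * (n : ℝ) * (1 / 2) = n * Real.pi by ring,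
      show 2 * Real.pi * (n : ℝ) * (-1 / 2) = -(n * Real.pi) by ring, Real.sin_neg,
      Real.sin_int_mul_pi]
    simp

lemma integral_cos_mul_cos (k n : ℤ) :
    ∫ ν in (-(1 : ℝ) / 2)..(1 / 2),
      Real.cos (2 * Real.pi * k * ν) * Real.cos (2 * Real.pi * n * ν) =
      ((if k = n then 1 else 0) + if k = -n then 1 else 0) / 2 := by
  have hproduct : ∀ ν : ℝ, Real.cos (2 * Real.pi * k * ν) * Real.cos (2 * Real.pi * n * ν) =
      (Real.cos (2 * Real.pi * (k - n : ℤ) * ν) + Real.cos (2 * Real.pi * (k + n : ℤ) * ν)) / 2 :=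
    fun ν => by
      push_cast
      rw [mul_sub, mul_add, sub_mul, add_mul, Real.cos_sub, Real.cos_add]
      ring
  simp_rw [hproduct]
  rw [intervalIntegral.integral_div, intervalIntegral.integral_add
    (Continuous.intervalIntegrable (by fun_prop) _ _)
    (Continuous.intervalIntegrable (by fun_prop) _ _),
    integral_cos_two_pi_int_mul, integral_cos_two_pi_int_mul]
  simp only [sub_eq_zero, add_eq_zero_iff_eq_neg]

lemma integral_spectralDensity_mul_cos (hsymm : ∀ k, C (-k) = C k)
    (hC : Summable fun k => |C k|) (n : ℤ) :
    ∫ ν in (-(1 : ℝ) / 2)..(1 / 2), spectralDensity C ν * Real.cos (2 * Real.pi * n * ν) =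
      C n := by
  have hsum : HasSum
      (fun k : ℤ => ∫ ν in (-(1 : ℝ) / 2)..(1 / 2),
        C k * Real.cos (2 * Real.pi * k * ν) * Real.cos (2 * Real.pi * n * ν))
      (∫ ν in (-(1 : ℝ) / 2)..(1 / 2),
        spectralDensity C ν * Real.cos (2 * Real.pi * n * ν)) :=
    intervalIntegral.hasSum_integral_of_dominated_convergence (fun k _ => |C k|)
      (fun k => (by fun_prop : Continuous _).aestronglyMeasurable)
      (fun k => ae_of_all _ fun ν _ => by
        rw [norm_mul]
        exact (mul_le_of_le_one_right (norm_nonneg _) (Real.abs_cos_le_one _)).trans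
          (norm_mul_cos_le _ _))
      (ae_of_all _ fun _ _ => hC) (by simp)
      (ae_of_all _ fun ν _ => (summable_mul_cos hC ν).hasSum.mul_right _)
  have hterm : ∀ k : ℤ, ∫ ν in (-(1 : ℝ) / 2)..(1 / 2),
      C k * Real.cos (2 * Real.pi * k * ν) * Real.cos (2 * Real.pi * n * ν) =
      (if k = n then C n / 2 else 0) + (if k = -n then C n / 2 else 0) := fun k => by
    simp_rw [mul_assoc (C k)]
    have hselect (j : ℤ) (hj : C j = C n) :
        C k * (if k = j then 1 else 0) / 2 = if k = j then C n / 2 else 0 := by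
      split_ifs with hk
      · rw [hk, hj, mul_one]
      · rw [mul_zero, zero_div]
    rw [intervalIntegral.integral_const_mul, integral_cos_mul_cos, mul_div_assoc', mul_add,
      add_div, hselect n rfl, hselect (-n) (hsymm n)]
  simp_rw [hterm] at hsum
  rw [hsum.unique ((hasSum_ite_eq n (C n / 2)).add (hasSum_ite_eq (-n) (C n / 2))), add_halves]

theorem dotProduct_toeplitzMatrix_mulVec (hsymm : ∀ k, C (-k) = C k)
    (hC : Summable fun k => |C k|) (x : Fin m → ℝ) :
    x ⬝ᵥ toeplitzMatrix C m *ᵥ x =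
      ∫ ν in (-(1 : ℝ) / 2)..(1 / 2), spectralDensity C ν * periodogram x ν := by
  have hcont := continuous_spectralDensity hC
  simp_rw [periodogram_eq_sum_sum, Finset.mul_sum]
  rw [intervalIntegral.integral_finsetSum fun _ _ =>
    Continuous.intervalIntegrable (by fun_prop) _ _]
  simp only [dotProduct, mulVec, Finset.mul_sum]
  refine Finset.sum_congr rfl fun j _ => ?_
  rw [intervalIntegral.integral_finsetSum fun _ _ =>
    Continuous.intervalIntegrable (by fun_prop) _ _]
  refine Finset.sum_congr rfl fun k _ => ?_
  simp_rw [mul_left_comm _ (x j * x k)]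
  rw [intervalIntegral.integral_const_mul, integral_spectralDensity_mul_cos hsymm hC,
    toeplitzMatrix, of_apply]
  ring

lemma integral_periodogram (x : Fin m → ℝ) :
    ∫ ν in (-(1 : ℝ) / 2)..(1 / 2), periodogram x ν = x ⬝ᵥ x := by
  have hone : toeplitzMatrix (Pi.single 0 1) m = 1 := by
    ext j k
    simp [toeplitzMatrix, Pi.single_apply, one_apply, sub_eq_zero, Fin.ext_iff]
  have hform := dotProduct_toeplitzMatrix_mulVec (C := Pi.single 0 1) (fun k => by
    simp [Pi.single_apply]) (summable_of_hasFiniteSupport ?_) x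
  · simpa only [hone, one_mulVec, spectralDensity_single, one_mul] using hform.symm
  · exact (Set.finite_singleton 0).subset fun k hk => by simpa [Pi.single_apply] using hk

theorem dotProduct_toeplitzMatrix_mulVec_nonneg (hsymm : ∀ k, C (-k) = C k)
    (hC : Summable fun k => |C k|)
    (hS : ∀ ν ∈ Set.Icc (-(1 : ℝ) / 2) (1 / 2), 0 ≤ spectralDensity C ν) (x : Fin m → ℝ) :
    0 ≤ x ⬝ᵥ toeplitzMatrix C m *ᵥ x := by
  rw [dotProduct_toeplitzMatrix_mulVec hsymm hC]
  exact intervalIntegral.integral_nonneg (by norm_num) fun ν hν =>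
    mul_nonneg (hS ν hν) (periodogram_nonneg x ν)

theorem dotProduct_toeplitzMatrix_mulVec_le (hsymm : ∀ k, C (-k) = C k)
    (hC : Summable fun k => |C k|) (x : Fin m → ℝ) :
    x ⬝ᵥ toeplitzMatrix C m *ᵥ x ≤
      (⨆ ν : Set.Icc (-(1 : ℝ) / 2) (1 / 2), spectralDensity C ν) * (x ⬝ᵥ x) := by
  have hcont := continuous_spectralDensity hC
  have hcont_periodogram := continuous_periodogram x
  have hbdd : BddAbove (Set.range fun ν : Set.Icc (-(1 : ℝ) / 2) (1 / 2) =>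
      spectralDensity C ν) := isCompact_range (by fun_prop) |>.bddAbove
  rw [dotProduct_toeplitzMatrix_mulVec hsymm hC, ← integral_periodogram,
    ← intervalIntegral.integral_const_mul]
  refine intervalIntegral.integral_mono_on (by norm_num)
    (Continuous.intervalIntegrable (by fun_prop) _ _)
    (Continuous.intervalIntegrable (by fun_prop) _ _) fun ν hν => ?_
  exact mul_le_mul_of_nonneg_right (le_ciSup hbdd ⟨ν, hν⟩) (periodogram_nonneg x ν)

lemma apply_zero_le_iSup_spectralDensity (hsymm : ∀ k, C (-k) = C k)
    (hC : Summable fun k => |C k|) :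
    C 0 ≤ ⨆ ν : Set.Icc (-(1 : ℝ) / 2) (1 / 2), spectralDensity C ν := by
  simpa [dotProduct, mulVec] using
    dotProduct_toeplitzMatrix_mulVec_le (m := 1) hsymm hC 1

end Toeplitz

section HaarConcentration

variable {m : Type*} [Fintype m]

lemma norm_toLp_sq (b : m → ℝ) : ‖WithLp.toLp 2 b‖ ^ 2 = b ⬝ᵥ b := by
  rw [← real_inner_self_eq_norm_sq, EuclideanSpace.inner_eq_star_dotProduct, star_trivial]

variable [DecidableEq m]

lemma inner_toEuclideanLin_self (A : Matrix m m ℝ) (x : EuclideanSpace ℝ m) :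
    ⟪A.toEuclideanLin x, x⟫ = x.ofLp ⬝ᵥ A *ᵥ x.ofLp := by
  rw [EuclideanSpace.inner_eq_star_dotProduct, ofLp_toLpLin, toLin'_apply, star_trivial]

lemma trace_toEuclideanLin (A : Matrix m m ℝ) :
    LinearMap.trace ℝ (EuclideanSpace ℝ m) A.toEuclideanLin = A.trace := by
  rw [toEuclideanLin, toLpLin_eq_toLin, trace_toLin_eq]

lemma dotProduct_mul_mul_transpose_mulVec (A : Matrix m m ℝ) (U : orthogonalGroup m ℝ)
    (b : m → ℝ) :
    b ⬝ᵥ (U.1 * A * U.1ᵀ) *ᵥ b =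
      ⟪A.toEuclideanLin (orthogonalGroupEquiv U⁻¹ (WithLp.toLp 2 b)),
        orthogonalGroupEquiv U⁻¹ (WithLp.toLp 2 b)⟫ := by
  rw [inner_toEuclideanLin_self, orthogonalGroupEquiv_apply]
  change _ = (U.1ᵀ *ᵥ b) ⬝ᵥ A *ᵥ (U.1ᵀ *ᵥ b)
  rw [mulVec_transpose, ← dotProduct_mulVec, ← mulVec_transpose, mulVec_mulVec, mulVec_mulVec]

lemma abs_dotProduct_mul_mul_transpose_mulVec_le_iff (A : Matrix m m ℝ)
    (U : orthogonalGroup m ℝ) {b : m → ℝ} (hb : b ≠ 0) (s : ℝ) :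
    |b ⬝ᵥ (U.1 * A * U.1ᵀ) *ᵥ b| ≤ s * (b ⬝ᵥ b) ↔
      |⟪A.toEuclideanLin (orthogonalGroupEquiv U⁻¹ (NormedSpace.normalize (WithLp.toLp 2 b))),
        orthogonalGroupEquiv U⁻¹ (NormedSpace.normalize (WithLp.toLp 2 b))⟫| ≤ s := by
  have hpos : 0 < ‖WithLp.toLp 2 b‖ ^ 2 := by
    have : WithLp.toLp 2 b ≠ 0 := by simpa using hb
    positivity
  rw [dotProduct_mul_mul_transpose_mulVec, inner_map_self_normalize, normalize_linearIsometryEquiv,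
    LinearIsometryEquiv.norm_map, ← norm_toLp_sq, abs_mul, abs_of_pos hpos, mul_comm s]
  exact mul_le_mul_iff_right₀ hpos

variable [MeasurableSpace (orthogonalGroup m ℝ)] [BorelSpace (orthogonalGroup m ℝ)]

theorem one_sub_exp_le_measureReal_abs_dotProduct_mulVec_le
    (μ : Measure (orthogonalGroup m ℝ)) [μ.IsMulLeftInvariant] [IsProbabilityMeasure μ]
    (hm : 1 < Fintype.card m) {A : Matrix m m ℝ} (hA : A.IsSymm) (htrace : A.trace = 0)
    {L s : ℝ} (hL : ∀ x, |x ⬝ᵥ A *ᵥ x| ≤ L * (x ⬝ᵥ x)) (hL_pos : 0 < L) (hs : 0 < s)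
    {b : m → ℝ} (hb : b ≠ 0) :
    1 - Real.exp (-(1 / 2 ^ 47 * (Fintype.card m * s ^ 2 / L ^ 2))) ≤
      μ.real {U | |b ⬝ᵥ (U.1 * A * U.1ᵀ) *ᵥ b| ≤ s * (b ⬝ᵥ b)} := by
  have : Nonempty m := Fintype.card_pos_iff.1 (zero_lt_one.trans hm)
  have hunit : ‖NormedSpace.normalize (WithLp.toLp 2 b)‖ = 1 :=
    NormedSpace.norm_normalize_eq_one_iff.2 (by simpa using hb)
  have hmeas : Measurable fun U : orthogonalGroup m ℝ =>
      orthogonalGroupEquiv U⁻¹ (NormedSpace.normalize (WithLp.toLp 2 b)) := by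
    simp only [orthogonalGroupEquiv_apply]
    exact Continuous.measurable (by fun_prop)
  have hconc := one_sub_exp_le_sphereUniform_real_abs_inner_map_self_le
    (isSymmetric_toEuclideanLin_iff.2 hA) ((trace_toEuclideanLin A).trans htrace)
    (by simpa using hm) (fun y => by
      rw [inner_toEuclideanLin_self, ← WithLp.toLp_ofLp 2 y, norm_toLp_sq]
      exact hL _) hL_pos hs
  rw [finrank_euclideanSpace, ← map_orthogonalGroupEquiv_inv_apply μ hunit,
    map_measureReal_apply hmeas
      (measurableSet_le (measurable_inner_map_self _).abs measurable_const)] at hconc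
  simpa only [abs_dotProduct_mul_mul_transpose_mulVec_le_iff A _ hb, Set.preimage_ofPred_eq] using
    hconc

end HaarConcentration

section CenteredToeplitz

variable {C : ℤ → ℝ} {m : ℕ}

lemma isSymm_toeplitzMatrix_sub_smul_one (hsymm : ∀ k, C (-k) = C k) :
    (toeplitzMatrix C m - C 0 • 1).IsSymm := by
  refine IsSymm.sub (IsSymm.ext fun j k => ?_) (isSymm_one.smul (C 0))
  rw [toeplitzMatrix, of_apply, of_apply, ← hsymm, neg_sub]

lemma trace_toeplitzMatrix_sub_smul_one : (toeplitzMatrix C m - C 0 • 1).trace = 0 := by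
  simp [trace]

lemma abs_dotProduct_toeplitzMatrix_sub_smul_one_mulVec_le (hsymm : ∀ k, C (-k) = C k)
    (hC : Summable fun k => |C k|) (hC_zero : 0 ≤ C 0)
    (hS : ∀ ν ∈ Set.Icc (-(1 : ℝ) / 2) (1 / 2), 0 ≤ spectralDensity C ν) (x : Fin m → ℝ) :
    |x ⬝ᵥ (toeplitzMatrix C m - C 0 • 1) *ᵥ x| ≤
      (⨆ ν : Set.Icc (-(1 : ℝ) / 2) (1 / 2), spectralDensity C ν) * (x ⬝ᵥ x) := by
  have hx : 0 ≤ x ⬝ᵥ x := norm_toLp_sq x ▸ sq_nonneg _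
  rw [sub_mulVec, smul_mulVec, one_mulVec, dotProduct_sub, dotProduct_smul, smul_eq_mul]
  exact abs_sub_le_of_nonneg_of_le (dotProduct_toeplitzMatrix_mulVec_nonneg hsymm hC hS x)
    (dotProduct_toeplitzMatrix_mulVec_le hsymm hC x) (mul_nonneg hC_zero hx)
    (mul_le_mul_of_nonneg_right (apply_zero_le_iSup_spectralDensity hsymm hC) hx)

end CenteredToeplitz

lemma abs_dotProduct_mulVec_sub_smul_one_le_iff {m : Type*} [Fintype m] [DecidableEq m]
    (A : Matrix m m ℝ) {c : ℝ} (hc : 0 < c) (U : orthogonalGroup m ℝ) {b : m → ℝ} (hb : b ≠ 0)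
    (s : ℝ) :
    |b ⬝ᵥ (U.1 * (A - c • 1) * U.1ᵀ) *ᵥ b| ≤ s * (b ⬝ᵥ b) ↔
      |b ⬝ᵥ (U.1 * A * U.1ᵀ) *ᵥ b / (c * ∑ i, b i ^ 2) - 1| ≤ s / c := by
  have hU : U.1 * U.1ᵀ = 1 := (mem_orthogonalGroup_iff _ _).1 U.2
  have hb_sq : ∑ i, b i ^ 2 = b ⬝ᵥ b := Finset.sum_congr rfl fun i _ => sq (b i)
  have hpos : 0 < c * (b ⬝ᵥ b) := mul_pos hc (by simpa using dotProduct_star_self_pos_iff.2 hb)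
  rw [Matrix.mul_sub, Matrix.sub_mul, Matrix.mul_smul, Matrix.smul_mul, Matrix.mul_one, hU,
    sub_mulVec, smul_mulVec, one_mulVec, dotProduct_sub, dotProduct_smul, smul_eq_mul, hb_sq,
    div_sub_one hpos.ne', abs_div, abs_of_pos hpos, div_le_iff₀ hpos]
  field_simp

/-- Theorem 1 of the paper (concentration of measure for FIR filters): there is a
universal constant `κ > 0` such that for every `m ≥ 2`, every summable symmetric
autocovariance `C` with `C(0) > 0` and nonnegative spectral density
`S(ν) = ∑_k C(k) cos(2πkν)`, every nonzero coefficient vector `b ∈ ℝ^m` and every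
`ε > 0`, a Haar-distributed orthogonal `U` satisfies
`|bᵀ U Σ Uᵀ b / (C(0) ‖b‖²) - 1| ≤ (2ε / C(0)) · sup_ν S(ν)`
with probability at least `1 - exp(-κ (m-1) ε²)`, where `Σ` is the Toeplitz
matrix with entries `Σ_{jk} = C(j-k)`. -/
theorem sic_concentration_fir :
    ∃ κ : ℝ, 0 < κ ∧
      ∀ m : ℕ, 2 ≤ m →
      ∀ C : ℤ → ℝ, (∀ k : ℤ, C (-k) = C k) → (Summable fun k : ℤ => |C k|) →
        0 < C 0 →
        (∀ ν ∈ Set.Icc (-(1 : ℝ) / 2) (1 / 2),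
          0 ≤ ∑' k : ℤ, C k * Real.cos (2 * Real.pi * (k : ℝ) * ν)) →
      ∀ b : Fin m → ℝ, b ≠ 0 →
      ∀ ε : ℝ, 0 < ε →
      let _i : MeasurableSpace (Matrix.orthogonalGroup (Fin m) ℝ) := borel _
      ∀ μ : Measure (Matrix.orthogonalGroup (Fin m) ℝ),
        μ.IsHaarMeasure → IsProbabilityMeasure μ →
        ENNReal.ofReal (1 - Real.exp (-κ * ((m : ℝ) - 1) * ε ^ 2)) ≤
          μ {U : Matrix.orthogonalGroup (Fin m) ℝ |
              abs (b ⬝ᵥ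
                    (((U : Matrix (Fin m) (Fin m) ℝ) *
                        (Matrix.of fun j k : Fin m => C ((j : ℤ) - (k : ℤ))) *
                        (U : Matrix (Fin m) (Fin m) ℝ)ᵀ).mulVec b) /
                    (C 0 * ∑ i, b i ^ 2) - 1) ≤
                (2 * ε / C 0) *
                  ⨆ ν : Set.Icc (-(1 : ℝ) / 2) (1 / 2),
                    ∑' k : ℤ, C k * Real.cos (2 * Real.pi * (k : ℝ) * (ν : ℝ))} := by
  refine ⟨1 / 2 ^ 47, by positivity, ?_⟩
  intro m hm C hsymm hC hC_zero hS b hb ε hε _ μ _ _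
  have : BorelSpace (orthogonalGroup (Fin m) ℝ) := ⟨rfl⟩
  set L := ⨆ ν : Set.Icc (-(1 : ℝ) / 2) (1 / 2), spectralDensity C ν
  have hL_pos : 0 < L := hC_zero.trans_le (apply_zero_le_iSup_spectralDensity hsymm hC)
  have hconc := one_sub_exp_le_measureReal_abs_dotProduct_mulVec_le μ
    (by rw [Fintype.card_fin]; exact hm)
    (isSymm_toeplitzMatrix_sub_smul_one hsymm) trace_toeplitzMatrix_sub_smul_one
    (abs_dotProduct_toeplitzMatrix_sub_smul_one_mulVec_le hsymm hC hC_zero.le hS) hL_pos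
    (s := 2 * ε * L) (by positivity) hb
  simp only [abs_dotProduct_mulVec_sub_smul_one_le_iff _ hC_zero _ hb, Fintype.card_fin,
    show 2 * ε * L / C 0 = 2 * ε / C 0 * L by ring] at hconc
  refine ENNReal.ofReal_le_of_le_toReal (le_trans ?_ hconc)
  have hexponent : (m : ℝ) * (2 * ε * L) ^ 2 / L ^ 2 = (m - 1) * ε ^ 2 + (3 * m + 1) * ε ^ 2 := by
    field_simp
    ring
  rw [hexponent]
  gcongr
  have : 0 ≤ (3 * m + 1) * ε ^ 2 := by positivity
  linarith
end
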